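/- For every n ≥ 3 there exists a simple closed n-gon P in ℝ² such that the polygonal diameter of int P equals ⌊n/2⌋ and the polygonal diameter of ext P equals ⌈n/2⌉ (both extremal bounds attained simultaneously). -/

import Mathlib

open Set Metric

abbrev Plane := EuclideanSpace ℝ (Fin 2)

/-- The `i`-th edge of the closed polygon with vertex cycle `p`. -/
def polyEdge {n : ℕ} (p : ZMod n → Plane) (i : ZMod n) : Set Plane :=
  segment ℝ (p i) (p (i + 1))

/-- The union of the edges of the closed polygon with vertex cycle `p`. -/
def polyBody {n : ℕ} (p : ZMod n → Plane) : Set Plane :=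
  ⋃ i, polyEdge p i

/-- `p` is the vertex cycle of a simple closed `n`-gon: distinct vertices,
consecutive edges meet exactly in their common endpoint, non-consecutive edges
are disjoint. -/
structure IsSimplePolygon {n : ℕ} (p : ZMod n → Plane) : Prop where
  three_le : 3 ≤ n
  inj : Function.Injective p
  consec : ∀ i : ZMod n, polyEdge p i ∩ polyEdge p (i + 1) = {p (i + 1)}
  nonconsec : ∀ i j : ZMod n, j ≠ i → j ≠ i + 1 → i ≠ j + 1 →
    polyEdge p i ∩ polyEdge p j = ∅

/-- The union of the bounded connected components of the complement of `P`
(the Jordan interior of `P`). -/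
def intP (P : Set Plane) : Set Plane :=
  {x | x ∉ P ∧ Bornology.IsBounded (connectedComponentIn Pᶜ x)}

/-- The union of the unbounded connected components of the complement of `P`
(the Jordan exterior of `P`). -/
def extP (P : Set Plane) : Set Plane :=
  {x | x ∉ P ∧ ¬ Bornology.IsBounded (connectedComponentIn Pᶜ x)}

/-- There is a polygonal path of `k` segments from `a` to `b` inside `S`. -/
def PolyPath (S : Set Plane) (a b : Plane) (k : ℕ) : Prop :=
  ∃ x : Fin (k + 1) → Plane, x 0 = a ∧ x (Fin.last k) = b ∧
    ∀ i : Fin k, segment ℝ (x i.castSucc) (x i.succ) ⊆ S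

/-- The minimal number of segments of a polygonal path from `a` to `b` in `S`. -/
noncomputable def polyDist (S : Set Plane) (a b : Plane) : ℕ :=
  sInf {k | PolyPath S a b k}


/-! ### Basic planar coordinates: three rays -/

/-- three directions `ev 1 = (1,0)`, `ev 2 = (0,1)`, `ev 3 = (-1,-1)`, 3-periodic. -/
noncomputable def ev (k : ℤ) : Plane :=
  if k % 3 = 1 then !₂[1, 0] else if k % 3 = 2 then !₂[0, 1] else !₂[-1, -1]

noncomputable def pt (k : ℤ) (p q : ℝ) : Plane := p • ev k + q • ev (k - 1)

lemma mod3 (k : ℤ) : k % 3 = 0 ∨ k % 3 = 1 ∨ k % 3 = 2 := by omega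

lemma ev_per {k l : ℤ} (h : k % 3 = l % 3) : ev k = ev l := by
  unfold ev; rw [h]

lemma pt_per {k l : ℤ} (h : k % 3 = l % 3) (p q : ℝ) : pt k p q = pt l p q := by
  unfold pt; rw [ev_per h, ev_per (show (k - 1) % 3 = (l - 1) % 3 by omega)]

lemma pt_c1 {k : ℤ} (h : k % 3 = 1) (p q : ℝ) : pt k p q = !₂[p - q, -q] := by
  have h1 : (k - 1) % 3 = 0 := by omega
  ext i; fin_cases i <;> simp [pt, ev, h, h1] <;> ring

lemma pt_c2 {k : ℤ} (h : k % 3 = 2) (p q : ℝ) : pt k p q = !₂[q, p] := by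
  have h1 : (k - 1) % 3 = 1 := by omega
  ext i; fin_cases i <;> simp [pt, ev, h, h1]

lemma pt_c0 {k : ℤ} (h : k % 3 = 0) (p q : ℝ) : pt k p q = !₂[-p, q - p] := by
  have h1 : (k - 1) % 3 = 2 := by omega
  ext i; fin_cases i <;> simp [pt, ev, h, h1] <;> ring

lemma vec_ext {a b c d : ℝ} : (!₂[a, b] : Plane) = !₂[c, d] ↔ a = c ∧ b = d := by
  constructor
  · intro h
    have h0 := congrArg (fun v : Plane => v 0) h
    have h1 := congrArg (fun v : Plane => v 1) h
    simp at h0 h1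
    exact ⟨h0, h1⟩
  · rintro ⟨rfl, rfl⟩; rfl

lemma pt_inj {k : ℤ} {p q p' q' : ℝ} (h : pt k p q = pt k p' q') : p = p' ∧ q = q' := by
  rcases mod3 k with hk | hk | hk
  · rw [pt_c0 hk, pt_c0 hk, vec_ext] at h; constructor <;> linarith [h.1, h.2]
  · rw [pt_c1 hk, pt_c1 hk, vec_ext] at h; constructor <;> linarith [h.1, h.2]
  · rw [pt_c2 hk, pt_c2 hk, vec_ext] at h; constructor <;> linarith [h.1, h.2]

lemma pt_shift1 {k l : ℤ} (h : l % 3 = (k + 1) % 3) (p q : ℝ) :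
    pt l p q = pt k (q - p) (-p) := by
  rcases mod3 k with hk | hk | hk
  · rw [pt_c0 hk, pt_c1 (by omega), vec_ext]; constructor <;> ring
  · rw [pt_c1 hk, pt_c2 (by omega), vec_ext]; constructor <;> ring
  · rw [pt_c2 hk, pt_c0 (by omega), vec_ext]; constructor <;> ring

lemma pt_shift2 {k l : ℤ} (h : l % 3 = (k + 2) % 3) (p q : ℝ) :
    pt l p q = pt k (-q) (p - q) := by
  rw [pt_shift1 (k := k + 1) (by omega), pt_shift1 (k := k) rfl]
  congr 1 <;> ring

lemma pt_lin (k : ℤ) (p q p' q' t : ℝ) : (1 - t) • pt k p q + t • pt k p' q' =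
    pt k ((1 - t) * p + t * p') ((1 - t) * q + t * q') := by
  unfold pt; module

lemma pt_cover (x : Plane) : ∃ k : ℤ, -1 ≤ k ∧ k ≤ 1 ∧ ∃ p q : ℝ, 0 ≤ p ∧ 0 ≤ q ∧ x = pt k p q := by
  have hx : x = !₂[x 0, x 1] := by ext i; fin_cases i <;> simp
  by_cases h1 : 0 ≤ x 0 ∧ 0 ≤ x 1
  · refine ⟨-1, by norm_num, by norm_num, x 1, x 0, h1.2, h1.1, ?_⟩
    rw [pt_c2 (by norm_num)]; exact hx
  by_cases h2 : x 1 ≤ 0 ∧ x 1 ≤ x 0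
  · refine ⟨1, by norm_num, by norm_num, x 0 - x 1, - x 1, by linarith, by linarith, ?_⟩
    rw [pt_c1 (by norm_num)]; rw [hx, vec_ext]; constructor <;> simp
  · refine ⟨0, by norm_num, by norm_num, - x 0, x 1 - x 0, ?_, ?_, ?_⟩
    · by_contra h; push Not at h h1 h2
      have := h1 (by linarith); have := h2 (by linarith); linarith
    · by_contra h; push Not at h h1 h2
      by_cases h5 : 0 ≤ x 0
      · have := h1 h5; have := h2 (by linarith); linarith
      · have := h2 (by linarith); linarith
    · rw [pt_c0 (by norm_num)]; rw [hx, vec_ext]; constructor <;> simp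

/-! ### The edges -/

/-- indices of the sloped edges -/
def Ed (n k : ℤ) : Prop := 2 ≤ k ∧ k ≤ n ∧ k ≠ n - 1

/-- radius of the second end point of the edge `k` -/
noncomputable def sr (n k : ℤ) : ℝ := if k = n then (n : ℝ) else (k : ℝ) + 3

noncomputable def gg (n k : ℤ) (p q : ℝ) : ℝ := p / ((k : ℝ) + 1) + q / sr n k

lemma sr_pos {n k : ℤ} (hn : 3 ≤ n) (hk : -1 ≤ k) : 0 < sr n k := by
  unfold sr; split_ifs
  · exact_mod_cast (by omega : 0 < n)
  · exact_mod_cast (by omega : 0 < k + 3)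

lemma gg_lin (n k : ℤ) (p q p' q' t : ℝ) :
    gg n k ((1 - t) * p + t * p') ((1 - t) * q + t * q') =
      (1 - t) * gg n k p q + t * gg n k p' q' := by
  unfold gg; ring

lemma sr_mono {n k k' : ℤ} (h : Ed n k) (h' : Ed n k') (hm : k % 3 = k' % 3) (hl : k ≤ k') :
    sr n k ≤ sr n k' := by
  obtain ⟨a, b, c⟩ := h
  obtain ⟨a', b', c'⟩ := h'
  unfold sr; split_ifs
  · exact le_rfl
  · omega
  · exact_mod_cast (by omega : k + 3 ≤ n)
  · have : (k : ℝ) ≤ k' := by exact_mod_cast hl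
    linarith

lemma gg_mono {n k k' : ℤ} (hn : 3 ≤ n) (h : Ed n k) (h' : Ed n k') (hm : k % 3 = k' % 3)
    (hl : k ≤ k') {p q : ℝ} (hp : 0 ≤ p) (hq : 0 ≤ q) : gg n k' p q ≤ gg n k p q := by
  have h1 := sr_mono h h' hm hl
  have h2 : 0 < sr n k := sr_pos hn (by have := h.1; omega)
  have h3 : (0 : ℝ) < (k : ℝ) + 1 := by have := h.1; exact_mod_cast (by omega : 0 < k + 1)
  have h4 : (k : ℝ) ≤ k' := by exact_mod_cast hl
  unfold gg; gcongr

lemma gg_mono_strict {n k k' : ℤ} (hn : 3 ≤ n) (h : Ed n k) (h' : Ed n k') (hm : k % 3 = k' % 3)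
    (hl : k < k') {p q : ℝ} (hp : 0 < p) (hq : 0 ≤ q) : gg n k' p q < gg n k p q := by
  have h1 := sr_mono h h' hm hl.le
  have h2 : 0 < sr n k := sr_pos hn (by have := h.1; omega)
  have h3 : (0 : ℝ) < (k : ℝ) + 1 := by have := h.1; exact_mod_cast (by omega : 0 < k + 1)
  have h4 : (k : ℝ) < k' := by exact_mod_cast hl
  have h5 : p / ((k' : ℝ) + 1) < p / ((k : ℝ) + 1) := by
    apply div_lt_div_of_pos_left hp h3; linarith
  have h6 : q / sr n k' ≤ q / sr n k := by gcongr
  unfold gg; linarith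

/-- the sloped edge `k` -/
def EE (n k : ℤ) : Set Plane :=
  {x | ∃ p q : ℝ, 0 ≤ p ∧ 0 ≤ q ∧ gg n k p q = 1 ∧ x = pt k p q}

/-- the two edges at the origin -/
def Wall2 : Set Plane := {x | ∃ c : ℝ, 0 ≤ c ∧ c ≤ 3 ∧ x = pt 2 c 0}
def Wall3 : Set Plane := {x | ∃ c : ℝ, 0 ≤ c ∧ c ≤ 4 ∧ x = pt 3 c 0}

def PB (n : ℤ) : Set Plane := {x | x ∈ Wall2 ∨ x ∈ Wall3 ∨ ∃ k, Ed n k ∧ x ∈ EE n k}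

/-! ### Bands -/

structure InB (n k : ℤ) (p q : ℝ) : Prop where
  v1 : -1 ≤ k
  v2 : k ≤ n
  v3 : k ≠ n - 1
  hp : 0 ≤ p
  hq : 0 ≤ q
  lo : 2 ≤ k → 1 < gg n k p q
  hi : Ed n (k + 3) → gg n (k + 3) p q < 1

lemma zero_mem (n : ℤ) (k : ℤ) : pt k 0 0 ∈ PB n := by
  left; refine ⟨0, le_rfl, by norm_num, ?_⟩
  simp [pt]

/-- every point off the polygon lies in a band -/
lemma band_cover {n k : ℤ} (hn : 3 ≤ n) {p q : ℝ} (hp : 0 ≤ p) (hq : 0 ≤ q) (h : pt k p q ∉ PB n) :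
    ∃ k', k' % 3 = k % 3 ∧ InB n k' p q := by
  obtain ⟨k0, hk0, hk1, hk2⟩ : ∃ k0 : ℤ, -1 ≤ k0 ∧ k0 ≤ 1 ∧ k0 % 3 = k % 3 := by
    rcases mod3 k with h | h | h
    · exact ⟨0, by omega, by omega, by omega⟩
    · exact ⟨1, by omega, by omega, by omega⟩
    · exact ⟨-1, by omega, by omega, by omega⟩
  obtain ⟨k', ⟨h1, h2, h3, h4⟩, hmax⟩ := Int.exists_greatest_of_bdd
    (P := fun k' => k' % 3 = k % 3 ∧ k' ≤ n ∧ k' ≠ n - 1 ∧ (k' = k0 ∨ (2 ≤ k' ∧ 1 < gg n k' p q)))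
    ⟨n, fun z hz => hz.2.1⟩ ⟨k0, hk2, by omega, by omega, Or.inl rfl⟩
  refine ⟨k', h1, ⟨by omega, h2, h3, hp, hq, fun h => ?_, fun h5 => ?_⟩⟩
  · rcases h4 with h4 | h4
    · omega
    · exact h4.2
  · rcases lt_trichotomy (gg n (k' + 3) p q) 1 with h6 | h6 | h6
    · exact h6
    · exfalso; apply h; right; right
      exact ⟨k' + 3, h5, p, q, hp, hq, h6, pt_per (by omega) _ _⟩
    · have := hmax (k' + 3) ⟨by omega, h5.2.1, h5.2.2, Or.inr ⟨h5.1, h6⟩⟩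
      omega

/-- segment avoiding the polygon -/
def Free (n : ℤ) (x y : Plane) : Prop := ∀ t : ℝ, 0 ≤ t → t ≤ 1 → (1 - t) • x + t • y ∉ PB n

lemma Free.symm {n : ℤ} {x y : Plane} (h : Free n x y) : Free n y x := by
  intro t h0 h1
  have := h (1 - t) (by linarith) (by linarith)
  rwa [sub_sub_cancel, add_comm] at this

lemma Free.left {n : ℤ} {x y : Plane} (h : Free n x y) : x ∉ PB n := by
  have := h 0 le_rfl zero_le_one
  simpa using this

lemma Free.right {n : ℤ} {x y : Plane} (h : Free n x y) : y ∉ PB n := h.symm.left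

lemma Free.sub {n : ℤ} {x y : Plane} (h : Free n x y) {a b : ℝ} (ha : 0 ≤ a) (ha' : a ≤ 1)
    (hb : 0 ≤ b) (hb' : b ≤ 1) : Free n ((1 - a) • x + a • y) ((1 - b) • x + b • y) := by
  intro t h0 h1
  have := h ((1 - t) * a + t * b) (by have : 0 ≤ 1 - t := by linarith
                                      positivity) (by nlinarith)
  have e : (1 - t) • ((1 - a) • x + a • y) + t • ((1 - b) • x + b • y) =
      (1 - ((1 - t) * a + t * b)) • x + ((1 - t) * a + t * b) • y := by module
  rw [e]; exact this

lemma band_same_aux {n k k' : ℤ} (hn : 3 ≤ n) {p q p' q' : ℝ} (h : InB n k p q)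
    (h' : InB n k' p' q') (hm : k % 3 = k' % 3) (hf : Free n (pt k p q) (pt k' p' q')) :
    ¬ k < k' := by
  intro hlt
  have v1 := h.v1
  have v2 := h'.v2
  have v3 := h'.v3
  have hE : Ed n (k + 3) := ⟨by omega, by omega, by omega⟩
  have hE' : Ed n k' := ⟨by omega, by omega, by omega⟩
  have a1 := h.hi hE
  have a2 := h'.lo (by omega)
  have a3 := gg_mono hn hE hE' (by omega) (by omega) h'.hp h'.hq
  set A := gg n (k + 3) p q
  set B := gg n (k + 3) p' q'
  have hd : 0 < B - A := by linarith
  have ht0 : 0 ≤ (1 - A) / (B - A) := div_nonneg (by linarith) hd.le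
  have ht1 : (1 - A) / (B - A) ≤ 1 := by rw [div_le_one hd]; linarith
  apply hf _ ht0 ht1
  rw [pt_per hm.symm p' q', pt_lin]
  right; right
  refine ⟨k + 3, hE, _, _, ?_, ?_, ?_, pt_per (by omega) _ _⟩
  · have := h.hp; have := h'.hp; have : 0 ≤ 1 - (1 - A) / (B - A) := by linarith
    positivity
  · have := h.hq; have := h'.hq; have : 0 ≤ 1 - (1 - A) / (B - A) := by linarith
    positivity
  · rw [gg_lin]; change (1 - (1 - A) / (B - A)) * A + (1 - A) / (B - A) * B = 1
    field_simp; ring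

lemma band_same {n k k' : ℤ} (hn : 3 ≤ n) {p q p' q' : ℝ} (h : InB n k p q)
    (h' : InB n k' p' q') (hm : k % 3 = k' % 3) (hf : Free n (pt k p q) (pt k' p' q')) :
    k = k' := by
  have h1 := band_same_aux hn h h' hm hf
  have h2 := band_same_aux hn h' h hm.symm hf.symm
  omega

lemma gg_left (n k : ℤ) (p : ℝ) : gg n k p 0 = p / ((k : ℝ) + 1) := by simp [gg]
lemma gg_right (n k : ℤ) (q : ℝ) : gg n k 0 q = q / sr n k := by simp [gg]

lemma lo_right {n k : ℤ} (hn : 3 ≤ n) {c : ℝ} (h : InB n k 0 c) (hk : 2 ≤ k) : sr n k < c := by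
  have := h.lo hk
  rwa [gg_right, one_lt_div (sr_pos hn (by omega))] at this
lemma hi_right {n k : ℤ} (hn : 3 ≤ n) {c : ℝ} (h : InB n k 0 c) (hk : Ed n (k + 3)) :
    c < sr n (k + 3) := by
  have := h.hi hk
  rwa [gg_right, div_lt_one (sr_pos hn (by have := h.v1; omega))] at this
lemma lo_left {n k : ℤ} {c : ℝ} (h : InB n k c 0) (hk : 2 ≤ k) : (k : ℝ) + 1 < c := by
  have := h.lo hk
  rwa [gg_left, one_lt_div (by exact_mod_cast (by omega : 0 < k + 1))] at this
lemma hi_left {n k : ℤ} {c : ℝ} (h : InB n k c 0) (hk : Ed n (k + 3)) :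
    c < (k : ℝ) + 4 := by
  have := h.hi hk
  have v1 := h.v1
  rw [gg_left, div_lt_one (by exact_mod_cast (by omega : 0 < k + 3 + 1))] at this
  push_cast at this; linarith

lemma pt_right (k : ℤ) (c : ℝ) : pt k 0 c = pt (k + 2) c 0 := by
  rw [pt_shift2 (k := k) rfl]; simp

lemma glue_c {n k : ℤ} (hn : 3 ≤ n) {c : ℝ} (hc : 0 < c) (h : InB n k 0 c)
    (hf : pt k 0 c ∉ PB n) (h0 : 0 ≤ k) (hk : k ≠ n) : (k : ℝ) + 3 < c := by
  by_cases h2 : 2 ≤ k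
  · have := lo_right hn h h2
    rwa [sr, if_neg hk] at this
  · have : k = 0 ∨ k = 1 := by omega
    rcases this with rfl | rfl
    · by_contra hh; push Not at hh; push_cast at hh
      apply hf; left; exact ⟨c, hc.le, by linarith, by rw [pt_right]; rfl⟩
    · by_contra hh; push Not at hh; push_cast at hh
      apply hf; right; left; exact ⟨c, hc.le, by linarith, by rw [pt_right]; rfl⟩

lemma glue {n k k' : ℤ} (hn : 3 ≤ n) {c : ℝ} (hc : 0 < c) (h : InB n k 0 c) (h' : InB n k' c 0)
    (hm : k' % 3 = (k + 2) % 3) (hf : pt k 0 c ∉ PB n) :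
    k' = k + 2 ∨ (k = n ∧ k' = n - 4) := by
  have v1 := h.v1
  have v2 := h.v2
  have v3 := h.v3
  have v1' := h'.v1
  have v2' := h'.v2
  have v3' := h'.v3
  rcases lt_trichotomy k' (k + 2) with hl | hl | hl
  · by_cases hkn : k = n
    · by_cases hE : Ed n (k' + 3)
      · exfalso
        have a := hi_left h' hE
        have b := lo_right hn h (by omega)
        rw [sr, if_pos hkn] at b
        have : (k' : ℝ) + 4 ≤ n := by
          have := hE.2.1; have := hE.2.2
          exact_mod_cast (by omega : k' + 4 ≤ n)
        linarith
      · right; refine ⟨hkn, ?_⟩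
        unfold Ed at hE; omega
    · have hk0 : 0 ≤ k := by omega
      have a := glue_c hn hc h hf hk0 hkn
      by_cases hE : Ed n (k' + 3)
      · have b := hi_left h' hE
        exfalso
        have : (k' : ℝ) + 4 ≤ k + 3 := by exact_mod_cast (by omega : k' + 4 ≤ k + 3)
        linarith
      · unfold Ed at hE
        -- here only `n = 3, k = 0` and `n = 4, k = 1`
        have hE2 : Ed n (k + 3) := ⟨by omega, by omega, by omega⟩
        have b := hi_right hn h hE2
        have hkn3 : k + 3 = n := by omega
        rw [sr, if_pos hkn3] at b
        exfalso
        have : (n : ℝ) = k + 3 := by exact_mod_cast hkn3.symm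
        linarith
  · exact Or.inl hl
  · exfalso
    have hE : Ed n (k + 3) := ⟨by omega, by omega, by omega⟩
    have a := hi_right hn h hE
    have b := lo_left h' (by omega)
    rw [sr, if_neg (by omega)] at a
    have : (k : ℝ) + 5 ≤ k' := by exact_mod_cast (by omega : k + 5 ≤ k')
    push_cast at a
    linarith


/-! ### Transitions along free segments -/

lemma band_at {n k : ℤ} (hn : 3 ≤ n) {p q r s : ℝ} (h : InB n k p q)
    (hf : Free n (pt k p q) (pt k r s)) (hr : 0 ≤ r) (hs : 0 ≤ s) : InB n k r s := by
  obtain ⟨k1, hk1, h1⟩ := band_cover hn hr hs hf.right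
  have := band_same hn h h1 hk1.symm (by rwa [pt_per hk1])
  subst this; exact h1

/-- crossing the ray `k+2` at `c` -/
structure Cross (n k k' : ℤ) (c : ℝ) : Prop where
  pos : 0 < c
  left : InB n k 0 c
  right : InB n k' c 0
  step : k' = k + 2 ∨ (k = n ∧ k' = n - 4)
  low : 0 ≤ k → k ≠ n → (k : ℝ) + 3 < c
  free : pt k 0 c ∉ PB n

lemma cross_mk {n k k' : ℤ} (hn : 3 ≤ n) {p q p' q' c : ℝ} (h : InB n k p q)
    (h' : InB n k' p' q') (hm : k' % 3 = (k + 2) % 3) (hc : 0 < c)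
    (hf : Free n (pt k p q) (pt k 0 c)) (hf' : Free n (pt k 0 c) (pt k' p' q')) :
    Cross n k k' c := by
  have h1 := band_at hn h hf le_rfl hc.le
  have e : pt k 0 c = pt k' c 0 := by rw [pt_right, pt_per hm]
  have h2 := band_at hn h' (by rw [← e]; exact hf'.symm) hc.le le_rfl
  exact ⟨hc, h1, h2, glue hn hc h1 h2 hm hf.right, glue_c hn hc h1 hf.right, hf.right⟩

lemma trans1 {n k k' : ℤ} (hn : 3 ≤ n) {p q p' q' : ℝ} (h : InB n k p q)
    (h' : InB n k' p' q') (hm : k' % 3 = (k + 2) % 3)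
    (hf : Free n (pt k p q) (pt k' p' q')) :
    (∃ c, Cross n k k' c ∧ c * (p + q') = q * q' + p * p' - p * q') ∨
    (∃ j c1 c2, Cross n j k c1 ∧ Cross n k' j c2 ∧ 0 < q + q' - p' ∧ 0 < p - q + p' ∧
      c1 * (q + q' - p') = p * (q' - p') - q * q' ∧
      c2 * (p - q + p') = p * (q' - p') - q * q') := by
  have hp := h.hp
  have hq := h.hq
  have hp' := h'.hp
  have hq' := h'.hq
  have ey : pt k' p' q' = pt k (-q') (p' - q') := pt_shift2 hm _ _
  have seg : ∀ t : ℝ, (1 - t) • pt k p q + t • pt k' p' q' =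
      pt k (p - t * (p + q')) (q + t * (p' - q' - q)) := by
    intro t; rw [ey, pt_lin]; congr 1 <;> ring
  have seg0 : (1 - (0 : ℝ)) • pt k p q + (0 : ℝ) • pt k' p' q' = pt k p q := by simp
  have seg1 : (1 - (1 : ℝ)) • pt k p q + (1 : ℝ) • pt k' p' q' = pt k' p' q' := by simp
  by_cases hz : p + q' = 0
  · have p0 : p = 0 := by linarith
    have q0 : q' = 0 := by linarith
    have hp1 : 0 < p' := by
      rcases hp'.lt_or_eq with h0 | h0
      · exact h0
      · exfalso; apply hf.right; rw [q0, ← h0]; exact zero_mem _ _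
    left; refine ⟨p', ?_, by rw [p0, q0]; ring⟩
    have e : pt k' p' q' = pt k 0 p' := by rw [ey, q0]; congr 1 <;> ring
    apply cross_mk hn h h' hm hp1
    · rw [← e]; exact hf
    · rw [← e]; have := hf.sub zero_le_one le_rfl zero_le_one le_rfl
      rwa [seg1] at this
  have hz' : 0 < p + q' := lt_of_le_of_ne (by positivity) (Ne.symm hz)
  have hu0 : 0 ≤ p / (p + q') := by positivity
  have hu1 : p / (p + q') ≤ 1 := by rw [div_le_one hz']; linarith
  set u := p / (p + q') with hu
  have hup : u * (p + q') = p := by rw [hu]; field_simp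
  have zu := seg u
  rw [hup, sub_self] at zu
  set c := q + u * (p' - q' - q) with hc
  have hce : c * (p + q') = q * q' + p * p' - p * q' := by
    rw [hc, add_mul, mul_assoc, mul_comm (p' - q' - q), ← mul_assoc, hup]; ring
  rcases lt_trichotomy c 0 with hc0 | hc0 | hc0
  · right
    have hM : 0 < p * (q' - p') - q * q' := by nlinarith
    have hpq' : 0 < q' - p' := by
      by_contra hh; push Not at hh; nlinarith [mul_nonneg hq hq']
    have hpq : 0 < p - q := by
      by_contra hh; push Not at hh
      nlinarith [mul_nonneg hq hp']
    have d1 : 0 < q + q' - p' := by linarith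
    have d2 : 0 < p - q + p' := by linarith
    set M := p * (q' - p') - q * q' with hMdef
    set u1 := q / (q + q' - p') with hu1d
    set u2 := (p - q) / (p - q + p') with hu2d
    have e1 : u1 * (q + q' - p') = q := by rw [hu1d]; field_simp
    have e2 : u2 * (p - q + p') = p - q := by rw [hu2d]; field_simp
    have u10 : 0 ≤ u1 := by positivity
    have u20 : 0 ≤ u2 := by positivity
    have u11 : u1 ≤ 1 := by rw [hu1d, div_le_one d1]; linarith
    have u21 : u2 ≤ 1 := by rw [hu2d, div_le_one d2]; linarith
    have c1pos : 0 < M / (q + q' - p') := by positivity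
    have c2pos : 0 < M / (p - q + p') := by positivity
    set c1 := M / (q + q' - p') with hc1
    set c2 := M / (p - q + p') with hc2
    have ec1 : c1 * (q + q' - p') = M := by rw [hc1]; field_simp
    have ec2 : c2 * (p - q + p') = M := by rw [hc2]; field_simp
    have f1 : p - u1 * (p + q') = c1 := by
      apply mul_right_cancel₀ d1.ne'
      rw [ec1, sub_mul, mul_assoc, mul_comm (p + q'), ← mul_assoc, e1, hMdef]; ring
    have f2 : p - u2 * (p + q') = - c2 := by
      apply mul_right_cancel₀ d2.ne'
      rw [neg_mul, ec2, sub_mul, mul_assoc, mul_comm (p + q'), ← mul_assoc, e2, hMdef]; ring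
    have z1 := seg u1
    rw [f1, show q + u1 * (p' - q' - q) = 0 by linear_combination -e1] at z1
    have z2 := seg u2
    rw [f2, show q + u2 * (p' - q' - q) = - c2 by linear_combination f2 + e2] at z2
    have z2' : (1 - u2) • pt k p q + u2 • pt k' p' q' = pt k' 0 c2 := by
      rw [z2, pt_shift2 hm]; congr 1; ring
    have x1 := hf.sub le_rfl zero_le_one u10 u11
    rw [seg0, z1] at x1
    have x2 := hf.sub u20 u21 zero_le_one le_rfl
    rw [seg1, z2'] at x2
    have x12 := hf.sub u10 u11 u20 u21
    rw [z1, z2'] at x12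
    have g1 : ∀ j : ℤ, j % 3 = (k + 1) % 3 → pt k c1 0 = pt j 0 c1 := fun j hj => by
      rw [pt_right]; exact pt_per (by omega) _ _
    have g2 : ∀ j : ℤ, j % 3 = (k + 1) % 3 → pt k' 0 c2 = pt j c2 0 := fun j hj => by
      rw [pt_right]; exact pt_per (by omega) _ _
    obtain ⟨j, hj, hj1⟩ := band_cover (k := k + 1) hn le_rfl c1pos.le
      (by rw [← g1 (k + 1) rfl]; exact x1.right)
    have hj2 : InB n j c2 0 := band_at hn hj1 (by rw [← g1 j hj, ← g2 j hj]; exact x12) c2pos.le le_rfl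
    have hk1 : InB n k c1 0 := band_at hn h x1 c1pos.le le_rfl
    have hk2 : InB n k' 0 c2 := band_at hn h' x2.symm le_rfl c2pos.le
    refine ⟨j, c1, c2, ⟨c1pos, hj1, hk1, ?_, ?_, ?_⟩, ⟨c2pos, hk2, hj2, ?_, ?_, x2.left⟩, d1, d2, ec1, ec2⟩
    · exact glue hn c1pos hj1 hk1 (by omega) (by rw [← g1 j hj]; exact x1.right)
    · exact glue_c hn c1pos hj1 (by rw [← g1 j hj]; exact x1.right)
    · rw [← g1 j hj]; exact x1.right
    · exact glue hn c2pos hk2 hj2 (by omega) x2.left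
    · exact glue_c hn c2pos hk2 x2.left
  · exfalso; apply hf u hu0 hu1; rw [zu, hc0]; exact zero_mem _ _
  · left; refine ⟨c, ?_, hce⟩
    have x1 := hf.sub le_rfl zero_le_one hu0 hu1
    rw [seg0, zu] at x1
    have x2 := hf.sub hu0 hu1 zero_le_one le_rfl
    rw [seg1, zu] at x2
    exact cross_mk hn h h' hm hc0 x1 x2


/-! ### Levels -/

lemma core {p q p' q' c : ℝ} (hp : 0 ≤ p) (hp' : 0 ≤ p') (hq' : 0 ≤ q') (hc : 0 < c)
    (he : c * (p + q') = q * q' + p * p' - p * q') (h : q < c ∨ 3 * q ≤ p) (hb : 3 * p' < 2 * q') :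
    False := by
  have hq1 : 0 < q' := by linarith
  have h1 : p * p' - p * q' ≤ - (p * q' / 3) := by nlinarith
  rcases h with h | h
  · nlinarith [mul_pos (sub_pos.2 h) hq1, mul_nonneg hc.le hp, mul_nonneg hp hq']
  · nlinarith [mul_nonneg (sub_nonneg.2 h) hq', mul_pos hc hq1, mul_nonneg hc.le hp]

lemma core2 {n k : ℤ} {p q : ℝ} (h : InB n k p q) (h0 : 0 ≤ k) (hk : k ≤ n - 5)
    (hb : 2 * q ≤ 3 * p) : q < (k : ℝ) + 3 := by
  have h1 := h.hi ⟨by omega, by omega, by omega⟩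
  rw [gg, sr, if_neg (by omega)] at h1
  push_cast at h1
  have hk0 : (0 : ℝ) ≤ k := by exact_mod_cast h0
  rw [div_add_div _ _ (by positivity) (by positivity), div_lt_one (by positivity)] at h1
  by_contra hh; push Not at hh
  nlinarith [mul_nonneg hk0 hk0, mul_nonneg hk0 (sub_nonneg.2 hh)]

open Classical in
noncomputable def af (k : ℤ) (p q : ℝ) : ℤ :=
  if (k = -1 ∧ p < 3 * q) ∨ (k ≠ -1 ∧ 3 * p < 2 * q) then 1 else 0

noncomputable def lev (n k : ℤ) (p q : ℝ) : ℤ :=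
  if (n - k) % 2 = 0 then min (k + 2 * af k p q) (n - 2) else k + 2 * af k p q

lemma af_cases (k : ℤ) (p q : ℝ) : (af k p q = 0 ∧ (k = -1 → 3 * q ≤ p) ∧ (k ≠ -1 → 2 * q ≤ 3 * p)) ∨
    (af k p q = 1 ∧ (k = -1 → p < 3 * q) ∧ (k ≠ -1 → 3 * p < 2 * q)) := by
  unfold af
  split_ifs with h
  · right; refine ⟨rfl, fun hk => ?_, fun hk => ?_⟩ <;> rcases h with h | h
    · exact h.2
    · exact absurd hk h.1
    · exact absurd h.1 hk
    · exact h.2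
  · left; push Not at h; exact ⟨rfl, fun hk => h.1 hk, fun hk => h.2 hk⟩

lemma lev_ev {n k : ℤ} {p q : ℝ} (h : (n - k) % 2 = 0) :
    lev n k p q = min (k + 2 * af k p q) (n - 2) := by rw [lev, if_pos h]
lemma lev_od {n k : ℤ} {p q : ℝ} (h : ¬ (n - k) % 2 = 0) :
    lev n k p q = k + 2 * af k p q := by rw [lev, if_neg h]

/-- case (b): direct crossing, `¬ (A = 0 ∧ A' = 1)` when deep -/
lemma caseb {n k k' : ℤ} {p q p' q' c : ℝ} (h : InB n k p q)
    (h' : InB n k' p' q') (hc : Cross n k k' c)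
    (he : c * (p + q') = q * q' + p * p' - p * q') (hk : k ≤ n - 5) (hs : k' = k + 2) :
    ¬ (af k p q = 0 ∧ af k' p' q' = 1) := by
  rintro ⟨a0, a1⟩
  have v1 := h.v1
  rcases af_cases k p q with ⟨_, b1, b2⟩ | ⟨b, _⟩
  swap
  · omega
  rcases af_cases k' p' q' with ⟨b, _⟩ | ⟨_, b3, b4⟩
  · omega
  refine core h.hp h'.hp h'.hq hc.pos he ?_ (b4 (by omega))
  by_cases hk1 : k = -1
  · right; exact b1 hk1
  · left; exact lt_trans (core2 h (by omega) hk (b2 hk1)) (hc.low (by omega) (by omega))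

lemma casec1 {n k k' j : ℤ} {p q p' q' c1 c2 : ℝ} (h : InB n k p q)
    (hc1 : Cross n j k c1) (hc2 : Cross n k' j c2) (d1 : 0 < q + q' - p') (d2 : 0 < p - q + p')
    (e1 : c1 * (q + q' - p') = p * (q' - p') - q * q')
    (e2 : c2 * (p - q + p') = p * (q' - p') - q * q') : ¬ 3 * p < 2 * q := by
  refine fun hb => core hc2.pos.le h.hp h.hq hc1.pos (q := 0) ?_ (Or.inl hc1.pos) hb
  apply mul_right_cancel₀ d1.ne'
  apply mul_right_cancel₀ d2.ne'
  linear_combination (c2 + q) * (p - q + p') * e1 + (p * (q' - p') - q * q' - (p - q) * (q + q' - p')) * e2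

lemma casec2 {n k k' j : ℤ} {p q p' q' c1 c2 : ℝ} (h' : InB n k' p' q')
    (hc1 : Cross n j k c1) (hc2 : Cross n k' j c2) (d1 : 0 < q + q' - p') (d2 : 0 < p - q + p')
    (e1 : c1 * (q + q' - p') = p * (q' - p') - q * q')
    (e2 : c2 * (p - q + p') = p * (q' - p') - q * q') : c2 ≤ q' ∧ p' < 3 * q' := by
  have hc : c2 * (p' + c1) = q' * c1 + p' * 0 - p' * c1 := by
    apply mul_right_cancel₀ d1.ne'
    apply mul_right_cancel₀ d2.ne'
    linear_combination (p' + c1) * (q + q' - p') * e2 + (p * (q' - p') - q * q' - (q' - p') * (p - q + p')) * e1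
  by_contra hh
  refine core h'.hp le_rfl hc1.pos.le hc2.pos hc ?_ (by linarith [hc1.pos])
  rw [not_and_or] at hh; push Not at hh; exact hh

lemma key1 {n k k' : ℤ} (hn : 3 ≤ n) {p q p' q' : ℝ} (h : InB n k p q)
    (h' : InB n k' p' q') (hm : k' % 3 = (k + 2) % 3)
    (hf : Free n (pt k p q) (pt k' p' q')) :
    (k - k') % 2 = 0 ∧ lev n k p q ≤ lev n k' p' q' + 2 ∧ lev n k' p' q' ≤ lev n k p q + 2 := by
  have v1 := h.v1
  have v2 := h.v2
  have v3 := h.v3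
  have v1' := h'.v1
  have v2' := h'.v2
  have v3' := h'.v3
  have A1 := af_cases k p q
  have A2 := af_cases k' p' q'
  have A1' : af k p q = 0 ∨ af k p q = 1 := by tauto
  have A2' : af k' p' q' = 0 ∨ af k' p' q' = 1 := by tauto
  rcases trans1 hn h h' hm hf with ⟨c, hc, he⟩ | ⟨j, c1, c2, hc1, hc2, d1, d2, e1, e2⟩
  · have B := caseb h h' hc he
    have hs := hc.step
    unfold lev
    split_ifs <;> omega
  · have hs1 := hc1.step
    have hs2 := hc2.step
    have w1 := hc1.left.v1
    have w2 := hc1.left.v2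
    have w3 := hc1.left.v3
    have C1 := casec1 h hc1 hc2 d1 d2 e1 e2
    obtain ⟨C2, C3⟩ := casec2 h' hc1 hc2 d1 d2 e1 e2
    have D1 : k ≠ -1 → af k p q = 0 := by
      intro hk
      rcases A1 with A | A
      · exact A.1
      · exact absurd (A.2.2 hk) C1
    have D2 : k' ≤ n - 5 → af k' p' q' = 1 := by
      intro hk
      rcases A2 with A | A
      · exfalso
        by_cases hk1 : k' = -1
        · have := A.2.1 hk1; linarith
        · have a := core2 h' (by omega) hk (A.2.2 hk1)
          have b := hc2.low (by omega) (by omega)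
          linarith
      · exact A.1
    clear A1 A2 C1 C2 C3 e1 e2 d1 d2 hc1 hc2 hf h h'
    unfold lev
    generalize af k p q = α at *
    generalize af k' p' q' = β at *
    rcases hs1 with hs1 | hs1 <;> rcases hs2 with hs2 | hs2
    · have D1 := D1 (by omega)
      subst D1
      by_cases hk : k' ≤ n - 5
      · have := D2 hk
        clear D2
        split_ifs <;> omega
      · clear D2
        split_ifs <;> omega
    · clear D1 D2
      split_ifs <;> omega
    · clear D1 D2
      split_ifs <;> omega
    · omega

lemma key {n k k' : ℤ} (hn : 3 ≤ n) {p q p' q' : ℝ} (h : InB n k p q)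
    (h' : InB n k' p' q') (hf : Free n (pt k p q) (pt k' p' q')) :
    (k - k') % 2 = 0 ∧ lev n k p q ≤ lev n k' p' q' + 2 ∧ lev n k' p' q' ≤ lev n k p q + 2 := by
  have : k' % 3 = k % 3 ∨ k' % 3 = (k + 2) % 3 ∨ k % 3 = (k' + 2) % 3 := by omega
  rcases this with hm | hm | hm
  · have e := band_same hn h h' hm.symm hf
    subst e
    have A1' : af k p q = 0 ∨ af k p q = 1 := by have := af_cases k p q; tauto
    have A2' : af k p' q' = 0 ∨ af k p' q' = 1 := by have := af_cases k p' q'; tauto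
    unfold lev
    split_ifs <;> omega
  · exact key1 hn h h' hm hf
  · obtain ⟨a, b, c⟩ := key1 hn h' h hm hf.symm
    exact ⟨by omega, c, b⟩


lemma three_res (a b : ℤ) : b % 3 = a % 3 ∨ b % 3 = (a + 2) % 3 ∨ a % 3 = (b + 2) % 3 := by omega

/-- the blind end point of the exterior corridor -/
lemma b_inB {n : ℤ} (hn : 3 ≤ n) : InB n (n - 2) (4 * ((n : ℝ) - 1) / 7) (6 * ((n : ℝ) - 1) / 7) := by
  have hn' : (3 : ℝ) ≤ n := by exact_mod_cast hn
  refine ⟨by omega, by omega, by omega, by linarith, by linarith, fun h => ?_, fun h => ?_⟩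
  · have h4 : (4 : ℝ) ≤ n := by exact_mod_cast (by omega : 4 ≤ n)
    rw [gg, sr, if_neg (by omega)]
    push_cast
    rw [show (n : ℝ) - 2 + 1 = n - 1 by ring, show (n : ℝ) - 2 + 3 = n + 1 by ring,
      div_add_div _ _ (by linarith) (by linarith), one_lt_div (by nlinarith)]
    nlinarith
  · have := h.2.1; omega

lemma b_lev {n k' : ℤ} (hn : 3 ≤ n) {p' q' : ℝ} (h' : InB n k' p' q')
    (hf : Free n (pt (n - 2) (4 * ((n : ℝ) - 1) / 7) (6 * ((n : ℝ) - 1) / 7)) (pt k' p' q')) :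
    n - 2 ≤ lev n k' p' q' := by
  have hn' : (3 : ℝ) ≤ n := by exact_mod_cast hn
  have hb := b_inB hn
  have hpar := (key hn hb h' hf).1
  have v1 := h'.v1
  have v2 := h'.v2
  have v3 := h'.v3
  rw [lev_ev (by omega)]
  have A := af_cases k' p' q'
  have A' : af k' p' q' = 0 ∨ af k' p' q' = 1 := by tauto
  suffices n - 2 ≤ k' ∨ (k' = n - 4 ∧ af k' p' q' = 1) by omega
  rcases three_res (n - 2) k' with hm | hm | hm
  · have e := band_same hn hb h' hm.symm hf
    left; omega
  · rcases trans1 hn hb h' hm hf with ⟨c, hc, he⟩ | ⟨j, c1, c2, hc1, hc2, d1, d2, e1, e2⟩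
    · have := hc.step; left; omega
    · have s1 := hc1.step
      have s2 := hc2.step
      by_cases h2 : n - 2 ≤ k'
      · exact Or.inl h2
      exfalso
      have a := lo_left hc1.right (by omega)
      push_cast at a
      have hq' := h'.hq
      have : c1 ≤ 4 * ((n : ℝ) - 1) / 7 := by
        have : 0 ≤ 6 * ((n : ℝ) - 1) / 7 := by linarith
        have : 0 ≤ 4 * ((n : ℝ) - 1) / 7 := by linarith
        apply le_of_mul_le_mul_right _ d1
        rw [e1]; nlinarith [mul_nonneg ‹0 ≤ 6 * ((n : ℝ) - 1) / 7› hq', mul_nonneg this ‹0 ≤ 6 * ((n : ℝ) - 1) / 7›]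
      linarith
  · rcases trans1 hn h' hb hm hf.symm with ⟨c, hc, he⟩ | ⟨j, c1, c2, hc1, hc2, d1, d2, e1, e2⟩
    · have s := hc.step
      rcases s with s | s
      swap
      · left; omega
      right; refine ⟨by omega, ?_⟩
      rcases A with ⟨_, A1, A2⟩ | A
      swap
      · exact A.1
      exfalso
      have hp' := h'.hp
      have hcp := hc.pos
      have hR : (0 : ℝ) < n - 1 := by linarith
      set R : ℝ := (n : ℝ) - 1 with hRd
      by_cases hk : k' = -1
      · have A := A1 hk
        nlinarith [mul_nonneg hcp.le hp', mul_pos hcp hR, mul_nonneg (sub_nonneg.2 A) hR.le]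
      · have A := A2 hk
        have l := hc.low (by omega) (by omega)
        have : (k' : ℝ) + 3 = R := by
          rw [hRd, show k' = n - 4 by omega]; push_cast; ring
        rw [this] at l
        nlinarith [mul_nonneg (sub_nonneg.2 l.le) hp', mul_pos hcp hR, mul_nonneg (sub_nonneg.2 A) hR.le]
    · have s1 := hc1.step
      have s2 := hc2.step
      have w2 := hc1.left.v2
      by_cases h2 : n - 2 ≤ k'
      · exact Or.inl h2
      exfalso
      have hj : j = n := by omega
      subst hj
      have a := lo_left hc2.right (by omega)
      have := (casec2 hb hc1 hc2 d1 d2 e1 e2).1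
      linarith

/-! ### Bands versus the polygon -/

/-- a point of a band lies on the polygon only on the walls or at one tip -/
lemma band_pb {n k : ℤ} (hn : 3 ≤ n) {p q : ℝ} (h : InB n k p q) (hz : pt k p q ∈ PB n) :
    (k = -1 ∧ q = 0 ∧ p ≤ 3) ∨ (k = 0 ∧ q = 0 ∧ p ≤ 4) ∨ (k = 0 ∧ p = 0 ∧ q ≤ 3) ∨
    (k = 1 ∧ p = 0 ∧ q ≤ 4) ∨ (k = n - 4 ∧ q = 0 ∧ p = n) ∨ (p = 0 ∧ q = 0) := by
  have v1 := h.v1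
  have v2 := h.v2
  have v3 := h.v3
  have hp := h.hp
  have hq := h.hq
  rcases hz with ⟨c, hc, hc', hz⟩ | ⟨c, hc, hc', hz⟩ | ⟨j, hj, p1, q1, hp1, hq1, hg, hz⟩
  · rcases mod3 k with hk | hk | hk
    · rw [pt_shift2 (k := k) (l := 2) (by omega)] at hz
      obtain ⟨a, b⟩ := pt_inj hz
      have p0 : p = 0 := by linarith
      subst p0
      by_cases hk0 : k = 0
      · exact Or.inr (Or.inr (Or.inl ⟨hk0, rfl, by linarith⟩))
      · exfalso
        have := lo_right hn h (by omega)
        have : (3 : ℝ) ≤ sr n k := by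
          unfold sr; split_ifs
          · exact_mod_cast hn
          · exact_mod_cast (by omega : 3 ≤ k + 3)
        linarith
    · rw [pt_shift1 (k := k) (l := 2) (by omega)] at hz
      obtain ⟨a, b⟩ := pt_inj hz
      exact Or.inr (Or.inr (Or.inr (Or.inr (Or.inr ⟨by linarith, by linarith⟩))))
    · rw [pt_per (show 2 % 3 = k % 3 by omega)] at hz
      obtain ⟨a, b⟩ := pt_inj hz
      subst a b
      by_cases hk0 : k = -1
      · exact Or.inl ⟨hk0, rfl, hc'⟩
      · exfalso
        have := lo_left h (by omega)
        have : (3 : ℝ) ≤ k + 1 := by exact_mod_cast (by omega : 3 ≤ k + 1)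
        linarith
  · rcases mod3 k with hk | hk | hk
    · rw [pt_per (show 3 % 3 = k % 3 by omega)] at hz
      obtain ⟨a, b⟩ := pt_inj hz
      subst a b
      by_cases hk0 : k = 0
      · exact Or.inr (Or.inl ⟨hk0, rfl, hc'⟩)
      · exfalso
        have := lo_left h (by omega)
        have : (4 : ℝ) ≤ k + 1 := by exact_mod_cast (by omega : 4 ≤ k + 1)
        linarith
    · rw [pt_shift2 (k := k) (l := 3) (by omega)] at hz
      obtain ⟨a, b⟩ := pt_inj hz
      have p0 : p = 0 := by linarith
      subst p0
      by_cases hk0 : k = 1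
      · exact Or.inr (Or.inr (Or.inr (Or.inl ⟨hk0, rfl, by linarith⟩)))
      · exfalso
        have := lo_right hn h (by omega)
        have : (4 : ℝ) ≤ sr n k := by
          unfold sr; split_ifs
          · exact_mod_cast (by omega : 4 ≤ n)
          · exact_mod_cast (by omega : 4 ≤ k + 3)
        linarith
    · rw [pt_shift1 (k := k) (l := 3) (by omega)] at hz
      obtain ⟨a, b⟩ := pt_inj hz
      exact Or.inr (Or.inr (Or.inr (Or.inr (Or.inr ⟨by linarith, by linarith⟩))))
  · have j1 := hj.1
    have j2 := hj.2.1
    have j3 := hj.2.2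
    have hj0 : (0 : ℝ) < j + 1 := by exact_mod_cast (by omega : 0 < j + 1)
    have hjk : j % 3 = k % 3 ∨ j % 3 = (k + 2) % 3 ∨ j % 3 = (k + 1) % 3 := by
      clear * -
      omega
    rcases hjk with hm | hm | hm
    · rw [pt_per hm] at hz
      obtain ⟨a, b⟩ := pt_inj hz
      subst a b
      exfalso
      by_cases hl : j ≤ k
      · have := gg_mono hn hj ⟨by omega, v2, v3⟩ hm hl hp hq
        have := h.lo (by omega)
        linarith
      · have hE : Ed n (k + 3) := ⟨by omega, by omega, by omega⟩
        have := gg_mono hn hE hj (by omega) (by omega) hp hq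
        have := h.hi hE
        linarith
    · rw [pt_shift2 hm] at hz
      obtain ⟨a, b⟩ := pt_inj hz
      have q0 : q1 = 0 := by linarith
      have p0 : p = 0 := by linarith
      subst q0 p0
      rw [gg_left, div_eq_one_iff_eq hj0.ne'] at hg
      have hq' : q = (j : ℝ) + 1 := by linarith
      subst hq'
      have hi : Ed n (k + 3) → k + 3 ≠ n → j < k + 5 := fun h1 h2 => by
        have := hi_right hn h h1
        rw [sr, if_neg h2] at this
        exact_mod_cast (by push_cast at this ⊢; linarith : (j : ℝ) < k + 5)
      by_cases k2 : 2 ≤ k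
      · exfalso
        have := lo_right hn h k2
        unfold sr at this
        split_ifs at this with hkn
        · have : n < j + 1 := by exact_mod_cast this
          omega
        · have : k + 3 < j + 1 := by exact_mod_cast this
          have := hi ⟨by omega, by omega, by omega⟩ (by omega)
          omega
      · have : k = -1 ∨ k = 0 ∨ k = 1 := by omega
        rcases this with e | e | e
        · have := hi ⟨by omega, by omega, by omega⟩ (by omega)
          omega
        · by_cases hj2 : j = 2
          · subst hj2
            exact Or.inr (Or.inr (Or.inl ⟨e, rfl, by norm_num⟩))
          · have := hi ⟨by omega, by omega, by omega⟩ (by omega)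
            omega
        · by_cases hj2 : j = 3
          · subst hj2
            exact Or.inr (Or.inr (Or.inr (Or.inl ⟨e, rfl, by norm_num⟩)))
          · have := hi ⟨by omega, by omega, by omega⟩ (by omega)
            omega
    · rw [pt_shift1 hm] at hz
      obtain ⟨a, b⟩ := pt_inj hz
      have q0 : q = 0 := by linarith
      have p0 : p1 = 0 := by linarith
      subst q0 p0
      have hs := sr_pos (k := j) hn (by omega)
      rw [gg_right, div_eq_one_iff_eq hs.ne'] at hg
      have hp' : p = sr n j := by linarith
      have hi : Ed n (k + 3) → p < (k : ℝ) + 4 := hi_left h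
      have lo : 2 ≤ k → (k : ℝ) + 1 < p := lo_left h
      rw [hp'] at hi lo
      right; right; right; right; left
      unfold sr at hi lo hp'
      split_ifs at hi lo hp' with hjn
      · have hi : Ed n (k + 3) → n < k + 4 := fun h => by exact_mod_cast hi h
        by_cases hk4 : k = n - 4
        · exact ⟨hk4, rfl, hp'⟩
        · have := hi ⟨by omega, by omega, by omega⟩
          omega
      · have hi : Ed n (k + 3) → j + 3 < k + 4 := fun h => by exact_mod_cast hi h
        have lo : 2 ≤ k → k + 1 < j + 3 := fun h => by exact_mod_cast lo h
        by_cases hk4 : k = n - 4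
        · by_cases hjn : j = n - 3
          · refine ⟨hk4, rfl, ?_⟩
            rw [hp', hjn]; push_cast; ring
          · omega
        · by_cases k2 : 2 ≤ k
          · have := lo k2
            have := hi ⟨by omega, by omega, by omega⟩
            omega
          · have := hi ⟨by omega, by omega, by omega⟩
            omega


/-! ### Polygonal paths -/

lemma PolyPath.nil (S : Set Plane) (a : Plane) : PolyPath S a a 0 :=
  ⟨fun _ => a, rfl, rfl, fun i => i.elim0⟩

lemma PolyPath.cons {S : Set Plane} {a b c : Plane} {k : ℕ} (h : segment ℝ a b ⊆ S)
    (hp : PolyPath S b c k) : PolyPath S a c (k + 1) := by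
  obtain ⟨x, h0, h1, h2⟩ := hp
  refine ⟨Fin.cons a x, rfl, ?_, ?_⟩
  · rw [← Fin.succ_last, Fin.cons_succ]; exact h1
  · intro i
    refine Fin.cases ?_ (fun j => ?_) i
    · simp only [Fin.castSucc_zero, Fin.cons_zero, Fin.cons_succ]
      rw [h0]; exact h
    · rw [Fin.castSucc_succ, Fin.cons_succ, Fin.cons_succ]
      exact h2 j

lemma PolyPath.uncons {S : Set Plane} {a c : Plane} {k : ℕ} (h : PolyPath S a c (k + 1)) :
    ∃ b, segment ℝ a b ⊆ S ∧ PolyPath S b c k := by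
  obtain ⟨x, h0, h1, h2⟩ := h
  refine ⟨x 1, ?_, fun i => x i.succ, rfl, ?_, fun i => ?_⟩
  · have := h2 0
    rw [← h0]; exact this
  · rw [← h1, ← Fin.succ_last]
  · exact h2 i.succ

lemma PolyPath.eq_of_zero {S : Set Plane} {a c : Plane} (h : PolyPath S a c 0) : a = c := by
  obtain ⟨x, h0, h1, h2⟩ := h
  rw [← h0, ← h1]; rfl

lemma PolyPath.trans {S : Set Plane} {b c : Plane} {l : ℕ} (h' : PolyPath S b c l) :
    ∀ {k : ℕ} {a : Plane}, PolyPath S a b k → PolyPath S a c (k + l)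
  | 0, a, h => by rw [h.eq_of_zero, zero_add]; exact h'
  | k + 1, a, h => by
    obtain ⟨d, hd, h2⟩ := h.uncons
    have := PolyPath.cons hd (PolyPath.trans h' h2)
    rwa [show k + l + 1 = k + 1 + l by ring] at this

lemma PolyPath.single {S : Set Plane} {a b : Plane} (h : segment ℝ a b ⊆ S) : PolyPath S a b 1 :=
  PolyPath.cons h (PolyPath.nil S b)

lemma PolyPath.symm {S : Set Plane} {b : Plane} :
    ∀ {k : ℕ} {a : Plane}, PolyPath S a b k → PolyPath S b a k
  | 0, a, h => by rw [h.eq_of_zero]; exact PolyPath.nil _ _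
  | k + 1, a, h => by
    obtain ⟨d, hd, h2⟩ := h.uncons
    exact PolyPath.trans (PolyPath.single (by rwa [segment_symm])) (PolyPath.symm h2)

/-! ### Colour classes -/

def Col (n e : ℤ) : Set Plane :=
  {x | x ∉ PB n ∧ ∃ k p q, InB n k p q ∧ x = pt k p q ∧ (n - k) % 2 = e}

lemma free_iff {n : ℤ} {x y : Plane} : Free n x y ↔ ∀ z ∈ segment ℝ x y, z ∉ PB n := by
  constructor
  · rintro h z ⟨a, b, ha, hb, hab, rfl⟩
    have := h b hb (by linarith)
    rwa [show 1 - b = a by linarith] at this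
  · intro h t h0 h1
    exact h _ ⟨1 - t, t, by linarith, h0, by ring, rfl⟩

lemma exists_band {n : ℤ} (hn : 3 ≤ n) {x : Plane} (h : x ∉ PB n) :
    ∃ k p q, InB n k p q ∧ x = pt k p q := by
  obtain ⟨k, _, _, p, q, hp, hq, rfl⟩ := pt_cover x
  obtain ⟨k', hk', h'⟩ := band_cover hn hp hq h
  exact ⟨k', p, q, h', pt_per hk'.symm _ _⟩

lemma Free.refl {n : ℤ} {x : Plane} (h : x ∉ PB n) : Free n x x := by
  intro t _ _
  rwa [← add_smul, sub_add_cancel, one_smul]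

lemma Free.part {n : ℤ} {x y z : Plane} (h : Free n x y) (hz : z ∈ segment ℝ x y) : Free n x z := by
  rw [free_iff] at *
  intro w hw
  exact h w ((convex_segment x y).segment_subset (left_mem_segment ℝ x y) hz hw)

lemma col_par {n e k : ℤ} (hn : 3 ≤ n) {p q : ℝ} (h : InB n k p q) (hx : pt k p q ∈ Col n e) :
    (n - k) % 2 = e := by
  obtain ⟨h0, k', p', q', h', e', he⟩ := hx
  have := (key hn h h' (by rw [← e']; exact Free.refl h0)).1
  omega

lemma free_seg {n e : ℤ} (hn : 3 ≤ n) {x y : Plane} (hx : x ∈ Col n e) (hf : Free n x y) :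
    segment ℝ x y ⊆ Col n e := by
  intro z hz
  have hz' := hf.part hz
  obtain ⟨h0, k, p, q, h, rfl, he⟩ := hx
  obtain ⟨k', p', q', h', rfl⟩ := exists_band hn hz'.right
  have := (key hn h h' hz').1
  exact ⟨hz'.right, k', p', q', h', rfl, by omega⟩

lemma Free.col {n e : ℤ} (hn : 3 ≤ n) {x y : Plane} (hx : x ∈ Col n e) (hf : Free n x y) :
    y ∈ Col n e := free_seg hn hx hf (right_mem_segment ℝ x y)

lemma seg_free {n e : ℤ} {x y : Plane} (h : segment ℝ x y ⊆ Col n e) : Free n x y := by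
  rw [free_iff]; intro z hz; exact (h hz).1

/-! ### Segments inside one band -/

lemma inB_convex {n k : ℤ} {p q p' q' t : ℝ} (h : InB n k p q) (h' : InB n k p' q') (h0 : 0 ≤ t)
    (h1 : t ≤ 1) : InB n k ((1 - t) * p + t * p') ((1 - t) * q + t * q') := by
  have ht : 0 ≤ 1 - t := by linarith
  have := h.hp
  have := h.hq
  have := h'.hp
  have := h'.hq
  refine ⟨h.v1, h.v2, h.v3, by positivity, by positivity, fun hk => ?_, fun hk => ?_⟩
  · have a := h.lo hk
    have b := h'.lo hk
    rw [gg_lin]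
    rcases h0.lt_or_eq with h0 | h0
    · nlinarith
    · rw [← h0]; linarith
  · have a := h.hi hk
    have b := h'.hi hk
    rw [gg_lin]
    rcases h0.lt_or_eq with h0 | h0
    · nlinarith
    · rw [← h0]; linarith

lemma conv_zero {a b t : ℝ} (ha : 0 ≤ a) (hb : 0 ≤ b) (h0 : 0 < t) (h1 : t < 1)
    (h : (1 - t) * a + t * b = 0) : a = 0 ∧ b = 0 := by
  have h2 : 0 < 1 - t := by linarith
  have x1 : 0 ≤ (1 - t) * a := by positivity
  have x2 : 0 ≤ t * b := by positivity
  have y1 : (1 - t) * a = 0 := by linarith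
  have y2 : t * b = 0 := by linarith
  simp only [mul_eq_zero] at y1 y2
  exact ⟨y1.resolve_left h2.ne', y2.resolve_left h0.ne'⟩

lemma conv_gt {a b t c : ℝ} (ha : c < a) (hb : c < b) (h0 : 0 < t) (h1 : t < 1) :
    c < (1 - t) * a + t * b := by nlinarith

lemma piece {n k : ℤ} (hn : 3 ≤ n) {p q p' q' : ℝ} (h : InB n k p q) (h' : InB n k p' q')
    (hx : pt k p q ∉ PB n) (hy : pt k p' q' ∉ PB n) (hk : k ≠ n - 4 ∨ 0 < q ∨ 0 < q') :
    Free n (pt k p q) (pt k p' q') := by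
  intro t h0 h1 hz
  rcases h0.lt_or_eq with h0 | h0
  swap
  · subst h0; simp at hz; exact hx hz
  rcases h1.lt_or_eq with h1 | h1
  swap
  · subst h1; simp at hz; exact hy hz
  rw [pt_lin] at hz
  have hp := h.hp
  have hq := h.hq
  have hp' := h'.hp
  have hq' := h'.hq
  rcases band_pb hn (inB_convex h h' h0.le h1.le) hz with ⟨rfl, b, c⟩ | ⟨rfl, b, c⟩ | ⟨rfl, b, c⟩ |
    ⟨rfl, b, c⟩ | ⟨a, b, c⟩ | ⟨b, c⟩
  · obtain ⟨rfl, rfl⟩ := conv_zero hq hq' h0 h1 b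
    have x1 : 3 < p := by
      by_contra hh; push Not at hh
      exact hx (Or.inl ⟨p, hp, hh, pt_per rfl _ _⟩)
    have x2 : 3 < p' := by
      by_contra hh; push Not at hh
      exact hy (Or.inl ⟨p', hp', hh, pt_per rfl _ _⟩)
    linarith [conv_gt x1 x2 h0 h1]
  · obtain ⟨rfl, rfl⟩ := conv_zero hq hq' h0 h1 b
    have x1 : 4 < p := by
      by_contra hh; push Not at hh
      exact hx (Or.inr (Or.inl ⟨p, hp, hh, pt_per rfl _ _⟩))
    have x2 : 4 < p' := by
      by_contra hh; push Not at hh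
      exact hy (Or.inr (Or.inl ⟨p', hp', hh, pt_per rfl _ _⟩))
    linarith [conv_gt x1 x2 h0 h1]
  · obtain ⟨rfl, rfl⟩ := conv_zero hp hp' h0 h1 b
    have x1 : 3 < q := by
      by_contra hh; push Not at hh
      exact hx (Or.inl ⟨q, hq, hh, by rw [pt_right]; exact pt_per rfl _ _⟩)
    have x2 : 3 < q' := by
      by_contra hh; push Not at hh
      exact hy (Or.inl ⟨q', hq', hh, by rw [pt_right]; exact pt_per rfl _ _⟩)
    linarith [conv_gt x1 x2 h0 h1]
  · obtain ⟨rfl, rfl⟩ := conv_zero hp hp' h0 h1 b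
    have x1 : 4 < q := by
      by_contra hh; push Not at hh
      exact hx (Or.inr (Or.inl ⟨q, hq, hh, by rw [pt_right]; exact pt_per rfl _ _⟩))
    have x2 : 4 < q' := by
      by_contra hh; push Not at hh
      exact hy (Or.inr (Or.inl ⟨q', hq', hh, by rw [pt_right]; exact pt_per rfl _ _⟩))
    linarith [conv_gt x1 x2 h0 h1]
  · obtain ⟨rfl, rfl⟩ := conv_zero hq hq' h0 h1 b
    rcases hk with hk | hk | hk
    · exact hk a
    · exact lt_irrefl _ hk
    · exact lt_irrefl _ hk
  · obtain ⟨rfl, rfl⟩ := conv_zero hq hq' h0 h1 c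
    obtain ⟨rfl, rfl⟩ := conv_zero hp hp' h0 h1 b
    exact hx (zero_mem _ _)

lemma Free.join {n : ℤ} {x y z : Plane} {s : ℝ} (h0 : 0 < s) (h1 : s < 1)
    (hz : z = (1 - s) • x + s • y) (h : Free n x z) (h' : Free n z y) : Free n x y := by
  intro t ht0 ht1
  rcases le_total t s with hts | hts
  · have := h (t / s) (by positivity) (by rw [div_le_one h0]; exact hts)
    have e : (1 - t / s) • x + (t / s) • z = (1 - t) • x + t • y := by
      rw [hz]
      have : t = t / s * s := by field_simp
      generalize t / s = w at *
      subst this; module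
    rwa [e] at this
  · have hs : 0 < 1 - s := by linarith
    have := h' ((t - s) / (1 - s)) (div_nonneg (by linarith) hs.le) (by rw [div_le_one hs]; linarith)
    have e : (1 - (t - s) / (1 - s)) • z + ((t - s) / (1 - s)) • y = (1 - t) • x + t • y := by
      rw [hz]
      have : t = (t - s) / (1 - s) * (1 - s) + s := by field_simp; ring
      generalize (t - s) / (1 - s) = w at *
      subst this; module
    rwa [e] at this


/-! ### Upper bounds -/

/-- the window between the bands `k` and `k+2` -/
lemma window {n k : ℤ} (hn : 3 ≤ n) (h1 : -1 ≤ k) (h2 : k + 2 ≤ n) (h3 : k + 2 ≠ n - 1)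
    (h4 : k ≠ n - 1) :
    InB n k 0 ((k : ℝ) + 4) ∧ InB n (k + 2) ((k : ℝ) + 4) 0 ∧ pt k 0 ((k : ℝ) + 4) ∉ PB n := by
  have hk : (-1 : ℝ) ≤ k := by exact_mod_cast h1
  have a : InB n k 0 ((k : ℝ) + 4) := by
    refine ⟨h1, by omega, h4, le_rfl, by linarith, fun h => ?_, fun h => ?_⟩
    · rw [gg_right, one_lt_div (sr_pos hn h1), sr, if_neg (by omega)]; linarith
    · rw [gg_right, div_lt_one (sr_pos hn (by omega)), sr, if_neg (by omega)]; push_cast; linarith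
  refine ⟨a, ⟨by omega, by omega, by omega, by linarith, le_rfl, fun h => ?_, fun h => ?_⟩, fun h => ?_⟩
  · rw [gg_left]; push_cast; rw [one_lt_div (by linarith)]; linarith
  · rw [gg_left]; push_cast; rw [div_lt_one (by linarith)]; linarith
  · rcases band_pb hn a h with ⟨b, c, d⟩ | ⟨b, c, d⟩ | ⟨b, c, d⟩ | ⟨b, c, d⟩ | ⟨b, c, d⟩ | ⟨c, d⟩
    · linarith
    · linarith
    · subst b; norm_num at d
    · subst b; norm_num at d
    · linarith
    · linarith

lemma chain {n e k' : ℤ} (hn : 3 ≤ n) {p' q' : ℝ} (h' : InB n k' p' q')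
    (hy : pt k' p' q' ∉ PB n) (hk : k' ≠ n - 4 ∨ 0 < q') :
    ∀ (m : ℕ) (k : ℤ) (p q : ℝ), InB n k p q → pt k p q ∈ Col n e → k' = k + 2 * m →
      PolyPath (Col n e) (pt k p q) (pt k' p' q') (m + 1)
  | 0, k, p, q, h, hx, hm => by
    have : k' = k := by simpa using hm
    subst this
    apply PolyPath.single
    apply free_seg hn hx
    apply piece hn h h' hx.1 hy
    tauto
  | m + 1, k, p, q, h, hx, hm => by
    have v1 := h.v1
    have v2 := h'.v2
    have v3 := h'.v3
    have v3' := h.v3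
    push_cast at hm
    obtain ⟨a, b, c⟩ := window hn v1 (by omega) (by omega) v3'
    have hk0 : (-1 : ℝ) ≤ k := by exact_mod_cast v1
    have hf : Free n (pt k p q) (pt k 0 ((k : ℝ) + 4)) :=
      piece hn h a hx.1 c (Or.inr (Or.inr (by linarith)))
    refine PolyPath.cons (free_seg hn hx hf) ?_
    have hc := hf.col hn hx
    rw [pt_right] at hc ⊢
    exact chain hn h' hy hk m (k + 2) _ _ b hc (by omega)

lemma int_upper {n : ℤ} (hn : 3 ≤ n) {x y : Plane} (hx : x ∈ Col n 1) (hy : y ∈ Col n 1) :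
    ∃ k : ℕ, (k : ℤ) ≤ n / 2 ∧ PolyPath (Col n 1) x y k := by
  obtain ⟨x0, k, p, q, h, rfl, he⟩ := id hx
  obtain ⟨y0, k', p', q', h', rfl, he'⟩ := id hy
  have v1 := h.v1
  have v2 := h.v2
  have v3 := h.v3
  have v1' := h'.v1
  have v2' := h'.v2
  have v3' := h'.v3
  rcases le_total k k' with hl | hl
  · refine ⟨((k' - k) / 2).toNat + 1, ?_, chain hn h' y0 (Or.inl (by omega)) _ _ _ _ h hx ?_⟩
    · push_cast; rw [Int.toNat_of_nonneg (by omega)]; omega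
    · rw [Int.toNat_of_nonneg (by omega)]; omega
  · refine ⟨((k - k') / 2).toNat + 1, ?_, (chain hn h x0 (Or.inl (by omega)) _ _ _ _ h' hy ?_).symm⟩
    · push_cast; rw [Int.toNat_of_nonneg (by omega)]; omega
    · rw [Int.toNat_of_nonneg (by omega)]; omega

/-- outer bands have no upper constraint -/
lemma outer_inB {n k : ℤ} (h1 : -1 ≤ k) (hk : k = n - 4 ∨ k = n - 2 ∨ k = n) {p q : ℝ} (hp : 0 ≤ p)
    (hq : 0 ≤ q) (hg : 2 ≤ k → 1 < gg n k p q) : InB n k p q :=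
  ⟨h1, by omega, by omega, hp, hq, hg, fun h => by unfold Ed at h; omega⟩

lemma u_pt {n : ℤ} (hn : 3 ≤ n) : InB n (n - 4) (3 * n) 1 ∧ pt (n - 4) (3 * n) 1 ∉ PB n := by
  have hn' : (3 : ℝ) ≤ n := by exact_mod_cast hn
  have a : InB n (n - 4) (3 * n) 1 := by
    refine outer_inB (by omega) (Or.inl rfl) (by linarith) zero_le_one fun h => ?_
    rw [gg]
    have h1 : (0 : ℝ) < 1 / sr n (n - 4) := one_div_pos.2 (sr_pos hn (by omega))
    have h4 : (6 : ℝ) ≤ n := by exact_mod_cast (by omega : 6 ≤ n)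
    have h2 : 1 < 3 * (n : ℝ) / (((n - 4 : ℤ) : ℝ) + 1) := by
      push_cast
      rw [one_lt_div (by linarith)]; linarith
    linarith
  refine ⟨a, fun h => ?_⟩
  rcases band_pb hn a h with ⟨b, c, d⟩ | ⟨b, c, d⟩ | ⟨b, c, d⟩ | ⟨b, c, d⟩ | ⟨b, c, d⟩ | ⟨c, d⟩ <;>
    linarith

/-- far point on the ray `k+2` -/
lemma far_pt {n k : ℤ} (hn : 3 ≤ n) (hk : k = n - 4 ∨ k = n - 2) :
    InB n k 0 (2 * n) ∧ InB n (k + 2) (2 * n) 0 ∧ pt k 0 (2 * n) ∉ PB n := by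
  have hn' : (3 : ℝ) ≤ n := by exact_mod_cast hn
  have a : InB n k 0 (2 * n) := by
    refine outer_inB (by omega) (by omega) le_rfl (by linarith) fun h => ?_
    rw [gg_right, one_lt_div (sr_pos hn (by omega)), sr, if_neg (by omega)]
    have : (k : ℝ) ≤ n - 2 := by exact_mod_cast (by omega : k ≤ n - 2)
    linarith
  refine ⟨a, outer_inB (by omega) (by omega) (by linarith) le_rfl fun h => ?_, fun h => ?_⟩
  · have h0 : (-1 : ℝ) ≤ k := by exact_mod_cast (by omega : -1 ≤ k)
    have : (k : ℝ) ≤ n - 2 := by exact_mod_cast (by omega : k ≤ n - 2)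
    rw [gg_left]; push_cast
    rw [one_lt_div (by linarith)]; linarith
  · rcases band_pb hn a h with ⟨b, c, d⟩ | ⟨b, c, d⟩ | ⟨b, c, d⟩ | ⟨b, c, d⟩ | ⟨b, c, d⟩ | ⟨c, d⟩ <;>
      linarith

lemma n_to_u {n : ℤ} (hn : 3 ≤ n) {p q : ℝ} (h : InB n n p q) (hx : pt n p q ∉ PB n) :
    Free n (pt n p q) (pt (n - 4) (3 * n) 1) := by
  have hn' : (3 : ℝ) ≤ n := by exact_mod_cast hn
  obtain ⟨u1, u2⟩ := u_pt hn
  have hp := h.hp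
  have hq := h.hq
  have hlo := h.lo (by omega)
  rw [gg, sr, if_pos rfl, div_add_div _ _ (by linarith) (by linarith), one_lt_div (by positivity)] at hlo
  set c : ℝ := (q + p * (3 * n) - p) / (p + 1) with hc
  have hp1 : 0 < p + 1 := by linarith
  have hcn : (n : ℝ) < c := by
    rw [hc, lt_div_iff₀ hp1]
    by_contra hh; push Not at hh
    nlinarith [mul_nonneg hp (by linarith : (0 : ℝ) ≤ n)]
  have a : InB n n 0 c := by
    refine outer_inB (by omega) (by omega) le_rfl (by linarith) fun _ => ?_
    rw [gg_right, one_lt_div (sr_pos hn (by omega)), sr, if_pos rfl]; exact hcn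
  have b : InB n (n - 4) c 0 := by
    refine outer_inB (by omega) (by omega) (by linarith) le_rfl fun h2 => ?_
    have h4 : (6 : ℝ) ≤ n := by exact_mod_cast (by omega : 6 ≤ n)
    rw [gg_left]; push_cast
    rw [one_lt_div (by linarith)]; linarith
  have hz : pt n 0 c ∉ PB n := by
    intro h
    rcases band_pb hn a h with ⟨b, c, d⟩ | ⟨b, c, d⟩ | ⟨b, c, d⟩ | ⟨b, c, d⟩ | ⟨b, c, d⟩ | ⟨c, d⟩
    · omega
    · omega
    · omega
    · omega
    · omega
    · linarith
  have e0 : pt n 0 c = pt (n - 4) c 0 := by rw [pt_right]; exact pt_per (by omega) _ _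
  have f1 := piece hn h a hx hz (Or.inl (by omega))
  have f2 := piece hn b u1 (by rw [← e0]; exact hz) u2 (Or.inr (Or.inr one_pos))
  rcases hp.lt_or_eq with hp0 | hp0
  · refine Free.join (s := p / (p + 1)) (by positivity) (by rw [div_lt_one hp1]; linarith) ?_ f1
      (by rw [e0]; exact f2)
    rw [pt_shift2 (k := n) (l := n - 4) (by omega), pt_lin]
    congr 1
    · field_simp; ring
    · rw [hc]; field_simp; ring
  · have : c = q := by rw [hc, ← hp0]; simp
    rw [← hp0, ← this, e0]; exact f2

lemma out4 {n k' : ℤ} (hn : 3 ≤ n) {p q p' q' : ℝ} (h : InB n (n - 4) p q) (hx : pt (n - 4) p q ∈ Col n 0)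
    (h' : InB n k' p' q') (hy : pt k' p' q' ∈ Col n 0) (hk : k' = n - 4 ∨ k' = n - 2 ∨ k' = n) :
    PolyPath (Col n 0) (pt (n - 4) p q) (pt k' p' q') 2 := by
  have hn' : (3 : ℝ) ≤ n := by exact_mod_cast hn
  obtain ⟨u1, u2⟩ := u_pt hn
  have f1 := piece hn h u1 hx.1 u2 (Or.inr (Or.inr one_pos))
  rcases hk with rfl | rfl | hk
  · have f2 := piece hn u1 h' u2 hy.1 (Or.inr (Or.inl one_pos))
    exact PolyPath.cons (free_seg hn hx f1) (PolyPath.single (free_seg hn (f1.col hn hx) f2))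
  · obtain ⟨a, b, c⟩ := far_pt hn (k := n - 4) (Or.inl rfl)
    have g1 := piece hn h a hx.1 c (Or.inr (Or.inr (by linarith)))
    have e : pt (n - 4) 0 (2 * n) = pt (n - 2) (2 * n) 0 := by rw [pt_right]; congr 1; ring
    have b' : InB n (n - 2) (2 * n) 0 := by
      rw [show n - 2 = n - 4 + 2 by ring]; exact b
    have g2 := piece hn b' h' (by rw [← e]; exact c) hy.1 (Or.inl (by omega))
    rw [← e] at g2
    exact PolyPath.cons (free_seg hn hx g1) (PolyPath.single (free_seg hn (g1.col hn hx) g2))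
  · subst hk
    have f2 := (n_to_u hn h' hy.1).symm
    exact PolyPath.cons (free_seg hn hx f1) (PolyPath.single (free_seg hn (f1.col hn hx) f2))

lemma out2n {n : ℤ} (hn : 3 ≤ n) {p q p' q' : ℝ} (h : InB n (n - 2) p q) (hx : pt (n - 2) p q ∈ Col n 0)
    (h' : InB n n p' q') (hy : pt n p' q' ∈ Col n 0) :
    PolyPath (Col n 0) (pt (n - 2) p q) (pt n p' q') 2 := by
  have hn' : (3 : ℝ) ≤ n := by exact_mod_cast hn
  obtain ⟨a, b, c⟩ := far_pt hn (k := n - 2) (Or.inr rfl)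
  have g1 := piece hn h a hx.1 c (Or.inr (Or.inr (by linarith)))
  have e : pt (n - 2) 0 (2 * n) = pt n (2 * n) 0 := by rw [pt_right]; congr 1; ring
  have b' : InB n n (2 * n) 0 := by
    rw [show n - 2 + 2 = n by ring] at b; exact b
  have g2 := piece hn b' h' (by rw [← e]; exact c) hy.1 (Or.inl (by omega))
  rw [← e] at g2
  exact PolyPath.cons (free_seg hn hx g1) (PolyPath.single (free_seg hn (g1.col hn hx) g2))

lemma ext_upper_aux {n k k' : ℤ} (hn : 3 ≤ n) {p q p' q' : ℝ} (h : InB n k p q)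
    (h' : InB n k' p' q') (hx : pt k p q ∈ Col n 0) (hy : pt k' p' q' ∈ Col n 0) (hl : k ≤ k') :
    ∃ m : ℕ, (m : ℤ) ≤ (n + 1) / 2 ∧ PolyPath (Col n 0) (pt k p q) (pt k' p' q') m := by
  have v1 := h.v1
  have v2 := h.v2
  have v1' := h'.v1
  have v2' := h'.v2
  have e1 := col_par hn h hx
  have e2 := col_par hn h' hy
  by_cases hk' : k' ≤ n - 6
  · refine ⟨((k' - k) / 2).toNat + 1, ?_, chain hn h' hy.1 (Or.inl (by omega)) _ _ _ _ h hx ?_⟩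
    · push_cast; rw [Int.toNat_of_nonneg (by omega)]; omega
    · rw [Int.toNat_of_nonneg (by omega)]; omega
  have ho : k' = n - 4 ∨ k' = n - 2 ∨ k' = n := by omega
  by_cases hk : k ≤ n - 6
  · obtain ⟨a, b, c⟩ := window hn (k := n - 6) (by omega) (by omega) (by omega) (by omega)
    have hpos : (0 : ℝ) < ((n - 6 : ℤ) : ℝ) + 4 := by exact_mod_cast (by omega : 0 < n - 6 + 4)
    have ch := chain (e := 0) hn a c (Or.inr hpos) ((n - 6 - k) / 2).toNat k p q h hx
      (by rw [Int.toNat_of_nonneg (by omega)]; omega)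
    have e : pt (n - 6) 0 (((n - 6 : ℤ) : ℝ) + 4) = pt (n - 4) (((n - 6 : ℤ) : ℝ) + 4) 0 := by
      rw [pt_right]; congr 1; ring
    have hw : pt (n - 6) 0 (((n - 6 : ℤ) : ℝ) + 4) ∈ Col n 0 := ⟨c, _, _, _, a, rfl, by omega⟩
    rw [e] at hw ch
    rw [show n - 6 + 2 = n - 4 by ring] at b
    have o := out4 hn b hw h' hy ho
    refine ⟨_, ?_, o.trans ch⟩
    push_cast; rw [Int.toNat_of_nonneg (by omega)]; omega
  have ho' : k = n - 4 ∨ k = n - 2 ∨ k = n := by omega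
  rcases ho' with rfl | rfl | hk
  · exact ⟨2, by push_cast; omega, out4 hn h hx h' hy ho⟩
  · by_cases hk2 : k' = n - 2
    · subst hk2
      exact ⟨1, by push_cast; omega, PolyPath.single (free_seg hn hx (piece hn h h' hx.1 hy.1 (Or.inl (by omega))))⟩
    · have : k' = n := by omega
      subst this
      exact ⟨2, by push_cast; omega, out2n hn h hx h' hy⟩
  · have : k' = n := by omega
    subst hk
    subst this
    exact ⟨1, by push_cast; omega, PolyPath.single (free_seg hn hx (piece hn h h' hx.1 hy.1 (Or.inl (by omega))))⟩

lemma ext_upper {n : ℤ} (hn : 3 ≤ n) {x y : Plane} (hx : x ∈ Col n 0) (hy : y ∈ Col n 0) :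
    ∃ k : ℕ, (k : ℤ) ≤ (n + 1) / 2 ∧ PolyPath (Col n 0) x y k := by
  obtain ⟨x0, k, p, q, h, rfl, he⟩ := id hx
  obtain ⟨y0, k', p', q', h', rfl, he'⟩ := id hy
  rcases le_total k k' with hl | hl
  · exact ext_upper_aux hn h h' hx hy hl
  · obtain ⟨m, hm, hp⟩ := ext_upper_aux hn h' h hy hx hl
    exact ⟨m, hm, hp.symm⟩


/-! ### Lower bounds -/

lemma path_lev {n e k' : ℤ} (hn : 3 ≤ n) {p' q' : ℝ} (h' : InB n k' p' q') :
    ∀ (m : ℕ) (k : ℤ) (p q : ℝ), InB n k p q →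
      PolyPath (Col n e) (pt k p q) (pt k' p' q') (m + 1) →
      lev n k' p' q' ≤ lev n k p q + 2 * (m + 1)
  | 0, k, p, q, h, hp => by
    obtain ⟨b, hb, h2⟩ := hp.uncons
    have := h2.eq_of_zero
    subst this
    have := (key hn h h' (seg_free hb)).2.2
    push_cast; omega
  | m + 1, k, p, q, h, hp => by
    obtain ⟨b, hb, h2⟩ := hp.uncons
    have hf := seg_free hb
    obtain ⟨k1, p1, q1, h1, rfl⟩ := exists_band hn hf.right
    have a := (key hn h h1 hf).2.2
    have b := path_lev hn h' m k1 p1 q1 h1 h2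
    push_cast; omega

lemma start0 {n : ℤ} (hn : 3 ≤ n) : InB n 0 1 1 ∧ pt 0 1 1 ∉ PB n ∧ af 0 1 1 = 0 := by
  have hn' : (3 : ℝ) ≤ n := by exact_mod_cast hn
  have a : InB n 0 1 1 := by
    refine ⟨by omega, by omega, by omega, zero_le_one, zero_le_one, fun h => by omega, fun h => ?_⟩
    unfold gg
    have : (3 : ℝ) ≤ sr n (0 + 3) := by
      unfold sr; split_ifs
      · exact hn'
      · norm_num
    have : 1 / sr n (0 + 3) ≤ 1 / 3 := one_div_le_one_div_of_le (by norm_num) this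
    norm_num at *
    linarith
  refine ⟨a, fun h => ?_, ?_⟩
  · rcases band_pb hn a h with ⟨b, c, d⟩ | ⟨b, c, d⟩ | ⟨b, c, d⟩ | ⟨b, c, d⟩ | ⟨b, c, d⟩ | ⟨c, d⟩ <;>
      linarith
  · rcases af_cases 0 1 1 with h | h
    · exact h.1
    · have := h.2.2 (by norm_num); norm_num at this

lemma start1 {n : ℤ} (hn : 3 ≤ n) :
    InB n (-1) 1 (1 / 3) ∧ pt (-1) 1 (1 / 3) ∉ PB n ∧ af (-1) 1 (1 / 3) = 0 := by
  have a : InB n (-1) 1 (1 / 3) := by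
    refine ⟨by omega, by omega, by omega, zero_le_one, by norm_num, fun h => by omega, fun h => ?_⟩
    unfold gg
    rw [sr, if_neg (by omega)]
    norm_num
  refine ⟨a, fun h => ?_, ?_⟩
  · rcases band_pb hn a h with ⟨b, c, d⟩ | ⟨b, c, d⟩ | ⟨b, c, d⟩ | ⟨b, c, d⟩ | ⟨b, c, d⟩ | ⟨c, d⟩ <;>
      linarith
  · rcases af_cases (-1) 1 (1 / 3) with h | h
    · exact h.1
    · have := h.2.1 rfl; norm_num at this

lemma endI {n : ℤ} (hn : 3 ≤ n) :
    InB n (n - 3) 1 ((n : ℝ) - 1) ∧ pt (n - 3) 1 ((n : ℝ) - 1) ∉ PB n ∧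
      lev n (n - 3) 1 ((n : ℝ) - 1) = n - 1 := by
  have hn' : (3 : ℝ) ≤ n := by exact_mod_cast hn
  have a : InB n (n - 3) 1 ((n : ℝ) - 1) := by
    refine ⟨by omega, by omega, by omega, zero_le_one, by linarith, fun h => ?_, fun h => ?_⟩
    · unfold gg
      rw [sr, if_neg (by omega)]
      push_cast
      rw [div_add_div _ _ (by linarith) (by linarith), one_lt_div (by nlinarith)]
      nlinarith
    · unfold gg
      rw [sr, if_pos (by omega)]
      push_cast
      rw [div_add_div _ _ (by linarith) (by linarith), div_lt_one (by nlinarith)]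
      nlinarith
  refine ⟨a, fun h => ?_, ?_⟩
  · rcases band_pb hn a h with ⟨b, c, d⟩ | ⟨b, c, d⟩ | ⟨b, c, d⟩ | ⟨b, c, d⟩ | ⟨b, c, d⟩ | ⟨c, d⟩ <;>
      linarith
  · rw [lev_od (by omega)]
    rcases af_cases (n - 3) 1 ((n : ℝ) - 1) with h | h
    · have := h.2.2 (by omega); linarith
    · rw [h.1]; ring

/-- start points of the two corridors -/
lemma start {n e : ℤ} (hn : 3 ≤ n) (he : e = 0 ∨ e = 1) :
    ∃ k p q, InB n k p q ∧ pt k p q ∈ Col n e ∧ -1 ≤ k ∧ k ≤ 0 ∧ lev n k p q = k ∧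
      (k = 0 → q = 1) ∧ (n - k) % 2 = e := by
  obtain ⟨a1, a2, a3⟩ := start0 hn
  obtain ⟨b1, b2, b3⟩ := start1 hn
  by_cases hp : n % 2 = e
  · refine ⟨0, 1, 1, a1, ⟨a2, 0, 1, 1, a1, rfl, by omega⟩, by omega, le_rfl, ?_, fun _ => rfl, by omega⟩
    unfold lev; rw [a3]; split_ifs <;> omega
  · refine ⟨-1, 1, 1 / 3, b1, ⟨b2, _, _, _, b1, rfl, by omega⟩, le_rfl, by omega, ?_, by omega, by omega⟩
    unfold lev; rw [b3]; split_ifs <;> omega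

lemma int_lower {n : ℤ} (hn : 3 ≤ n) : ∃ x ∈ Col n 1, ∃ y ∈ Col n 1,
    ∀ k : ℕ, PolyPath (Col n 1) x y k → n / 2 ≤ k := by
  obtain ⟨k, p, q, h, hx, hk1, hk0, hlev, hq, hpar⟩ := start (n := n) (e := 1) hn (Or.inr rfl)
  obtain ⟨a1, a2, a3⟩ := endI hn
  refine ⟨_, hx, _, ⟨a2, _, _, _, a1, rfl, by omega⟩, fun m hm => ?_⟩
  rcases m with _ | m
  · exfalso
    have e := hm.eq_of_zero
    have := (key hn h a1 (by rw [← e]; exact Free.refl hx.1)).2.2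
    have hn3 : n = 3 := by omega
    have hk : k = 0 := by omega
    have hq1 := hq hk
    subst hn3 hk
    have := (pt_inj e).2
    rw [hq1] at this
    norm_num at this
  · have := path_lev hn a1 m k p q h hm
    push_cast; omega

lemma ext_lower {n : ℤ} (hn : 3 ≤ n) : ∃ x ∈ Col n 0, ∃ y ∈ Col n 0,
    ∀ k : ℕ, PolyPath (Col n 0) x y k → (n + 1) / 2 ≤ k := by
  obtain ⟨k, p, q, h, hx, hk1, hk0, hlev, hq, hpar⟩ := start (n := n) (e := 0) hn (Or.inl rfl)
  have hn' : (3 : ℝ) ≤ n := by exact_mod_cast hn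
  have hb := b_inB hn
  have hb0 : pt (n - 2) (4 * ((n : ℝ) - 1) / 7) (6 * ((n : ℝ) - 1) / 7) ∉ PB n := by
    intro h
    rcases band_pb hn hb h with ⟨b, c, d⟩ | ⟨b, c, d⟩ | ⟨b, c, d⟩ | ⟨b, c, d⟩ | ⟨b, c, d⟩ | ⟨c, d⟩ <;>
      linarith
  refine ⟨_, ⟨hb0, _, _, _, hb, rfl, by omega⟩, _, hx, fun m hm => ?_⟩
  rcases m with _ | m
  · exfalso
    have e := hm.eq_of_zero
    have := b_lev hn h (by rw [e]; exact Free.refl hx.1)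
    omega
  · obtain ⟨b, hbs, h2⟩ := hm.uncons
    have hf := seg_free hbs
    obtain ⟨k1, p1, q1, h1, rfl⟩ := exists_band hn hf.right
    rcases m with _ | m
    · exfalso
      rw [h2.eq_of_zero] at hf
      have := b_lev hn h hf
      omega
    · have a := b_lev hn h1 hf
      have b := path_lev hn h1 m k p q h h2.symm
      push_cast; omega


/-! ### Topology -/

lemma col_cover {n : ℤ} (hn : 3 ≤ n) {x : Plane} (h : x ∉ PB n) : x ∈ Col n 1 ∨ x ∈ Col n 0 := by
  obtain ⟨k, p, q, hb, rfl⟩ := exists_band hn h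
  rcases (by omega : (n - k) % 2 = 1 ∨ (n - k) % 2 = 0) with e | e
  · exact Or.inl ⟨h, k, p, q, hb, rfl, e⟩
  · exact Or.inr ⟨h, k, p, q, hb, rfl, e⟩

lemma col_disj {n : ℤ} (hn : 3 ≤ n) : Disjoint (Col n 1) (Col n 0) := by
  rw [Set.disjoint_left]
  rintro x ⟨_, k, p, q, h, rfl, e⟩ h2
  have := col_par hn h h2
  omega

lemma col_open {n e : ℤ} (hn : 3 ≤ n) (hcl : IsClosed (PB n)) : IsOpen (Col n e) := by
  rw [Metric.isOpen_iff]
  intro x hx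
  obtain ⟨r, hr, hb⟩ := Metric.isOpen_iff.1 hcl.isOpen_compl x hx.1
  refine ⟨r, hr, fun y hy => ?_⟩
  have hs : segment ℝ x y ⊆ ball x r :=
    (convex_ball x r).segment_subset (mem_ball_self hr) hy
  exact (free_iff.2 fun z hz => hb (hs hz)).col hn hx

lemma ev_bound : ∃ C : ℝ, 0 ≤ C ∧ ∀ k, ‖ev k‖ ≤ C := by
  refine ⟨‖ev 0‖ + ‖ev 1‖ + ‖ev 2‖, by positivity, fun k => ?_⟩
  rcases mod3 k with h | h | h
  · rw [ev_per (show k % 3 = 0 % 3 by omega)]; linarith [norm_nonneg (ev 1), norm_nonneg (ev 2)]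
  · rw [ev_per (show k % 3 = 1 % 3 by omega)]; linarith [norm_nonneg (ev 0), norm_nonneg (ev 2)]
  · rw [ev_per (show k % 3 = 2 % 3 by omega)]; linarith [norm_nonneg (ev 0), norm_nonneg (ev 1)]

lemma col1_bdd {n : ℤ} (hn : 3 ≤ n) : Bornology.IsBounded (Col n 1) := by
  obtain ⟨C, hC, hb⟩ := ev_bound
  have hn' : (3 : ℝ) ≤ n := by exact_mod_cast hn
  rw [isBounded_iff_forall_norm_le]
  refine ⟨(n + 1) * C + (n + 3) * C, ?_⟩
  rintro x ⟨_, k, p, q, h, rfl, e⟩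
  have v1 := h.v1
  have v2 := h.v2
  have v3 := h.v3
  have hE : Ed n (k + 3) := ⟨by omega, by omega, by omega⟩
  have hi := h.hi hE
  have hs := sr_pos (k := k + 3) hn (by omega)
  have hk0 : (-1 : ℝ) ≤ k := by exact_mod_cast v1
  have hk3 : (k : ℝ) + 3 ≤ n := by exact_mod_cast hE.2.1
  have hs3 : sr n (k + 3) ≤ n + 3 := by
    unfold sr; split_ifs
    · linarith
    · push_cast; linarith
  unfold gg at hi
  push_cast at hi
  have hp := h.hp
  have hq := h.hq
  have hk4 : 0 < (k : ℝ) + 3 + 1 := by linarith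
  have a1 : 0 ≤ p / ((k : ℝ) + 3 + 1) := by positivity
  have a2 : 0 ≤ q / sr n (k + 3) := by positivity
  have b1 : p < (k : ℝ) + 3 + 1 := by rw [← div_lt_one hk4]; linarith
  have b2 : q < sr n (k + 3) := by rw [← div_lt_one hs]; linarith
  calc ‖pt k p q‖ ≤ ‖p • ev k‖ + ‖q • ev (k - 1)‖ := norm_add_le _ _
    _ = p * ‖ev k‖ + q * ‖ev (k - 1)‖ := by
      rw [norm_smul, norm_smul, Real.norm_of_nonneg hp, Real.norm_of_nonneg hq]
    _ ≤ (n + 1) * C + (n + 3) * C := by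
      have := hb k
      have := hb (k - 1)
      gcongr <;> linarith

lemma PolyPath.conn {S T : Set Plane} (hST : S ⊆ T) {b : Plane} :
    ∀ {k : ℕ} {a : Plane}, a ∈ S → PolyPath S a b k → b ∈ connectedComponentIn T a
  | 0, a, ha, h => by rw [← h.eq_of_zero]; exact mem_connectedComponentIn (hST ha)
  | k + 1, a, ha, h => by
    obtain ⟨d, hd, h2⟩ := h.uncons
    have h3 : d ∈ connectedComponentIn T a :=
      (convex_segment a d).isPreconnected.subset_connectedComponentIn (left_mem_segment ℝ a d)
        (hd.trans hST) (right_mem_segment ℝ a d)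
    rw [connectedComponentIn_eq h3]
    exact PolyPath.conn hST (hd (right_mem_segment ℝ a d)) h2

lemma ev_ne (k : ℤ) : ev k ≠ 0 := by
  intro h
  have : pt k 1 0 = pt k 0 0 := by simp [pt, h]
  have := (pt_inj this).1
  norm_num at this

lemma far_col {n : ℤ} (hn : 3 ≤ n) {c : ℝ} (hc : (n : ℝ) + 1 < c) : pt n c 0 ∈ Col n 0 := by
  have hn' : (3 : ℝ) ≤ n := by exact_mod_cast hn
  have a : InB n n c 0 := by
    refine outer_inB (by omega) (by omega) (by linarith) le_rfl fun _ => ?_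
    rw [gg_left, one_lt_div (by linarith)]; exact hc
  refine ⟨fun h => ?_, n, c, 0, a, rfl, by simp⟩
  rcases band_pb hn a h with ⟨b, c, d⟩ | ⟨b, c, d⟩ | ⟨b, c, d⟩ | ⟨b, c, d⟩ | ⟨b, c, d⟩ | ⟨c, d⟩
  · omega
  · omega
  · omega
  · omega
  · omega
  · linarith

lemma cc1 {n : ℤ} (hn : 3 ≤ n) (hcl : IsClosed (PB n)) {x : Plane} (hx : x ∈ Col n 1) :
    Bornology.IsBounded (connectedComponentIn (PB n)ᶜ x) := by
  refine (col1_bdd hn).subset ?_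
  refine IsPreconnected.subset_left_of_subset_union (col_open hn hcl) (col_open hn hcl) (col_disj hn)
    (fun y hy => ?_) ⟨x, mem_connectedComponentIn hx.1, hx⟩ isPreconnected_connectedComponentIn
  exact col_cover hn (connectedComponentIn_subset _ _ hy)

lemma cc0 {n : ℤ} (hn : 3 ≤ n) {x : Plane} (hx : x ∈ Col n 0) :
    ¬ Bornology.IsBounded (connectedComponentIn (PB n)ᶜ x) := by
  intro hb
  have hsub : ∀ y ∈ Col n 0, y ∈ connectedComponentIn (PB n)ᶜ x := fun y hy => by
    obtain ⟨k, _, hk⟩ := ext_upper hn hx hy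
    exact hk.conn (fun z hz => hz.1) hx
  rw [isBounded_iff_forall_norm_le] at hb
  obtain ⟨M, hM⟩ := hb
  have he : 0 < ‖ev n‖ := norm_pos_iff.2 (ev_ne n)
  have hn' : (3 : ℝ) ≤ n := by exact_mod_cast hn
  have hc : (n : ℝ) + 1 < |M| / ‖ev n‖ + n + 2 := by
    have : 0 ≤ |M| / ‖ev n‖ := by positivity
    linarith
  have := hM _ (hsub _ (far_col hn hc))
  rw [pt, zero_smul, add_zero, norm_smul, Real.norm_of_nonneg (by linarith)] at this
  have h2 : (|M| / ‖ev n‖ + n + 2) * ‖ev n‖ = |M| + (n + 2) * ‖ev n‖ := by field_simp; ring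
  rw [h2] at this
  have := le_abs_self M
  nlinarith

lemma intP_eq {n : ℤ} (hn : 3 ≤ n) (hcl : IsClosed (PB n)) : intP (PB n) = Col n 1 := by
  ext x; constructor
  · rintro ⟨h1, h2⟩
    rcases col_cover hn h1 with h | h
    · exact h
    · exact absurd h2 (cc0 hn h)
  · intro h; exact ⟨h.1, cc1 hn hcl h⟩

lemma extP_eq {n : ℤ} (hn : 3 ≤ n) (hcl : IsClosed (PB n)) : extP (PB n) = Col n 0 := by
  ext x; constructor
  · rintro ⟨h1, h2⟩
    rcases col_cover hn h1 with h | h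
    · exact absurd (cc1 hn hcl h) h2
    · exact h
  · intro h; exact ⟨h.1, cc0 hn h⟩


/-! ### The polygon -/

noncomputable def vx (j : ℤ) : Plane := pt j (if j = 0 then 0 else (j : ℝ) + 1) 0

lemma vx_of {j : ℤ} (h : j ≠ 0) : vx j = pt j ((j : ℝ) + 1) 0 := by rw [vx, if_neg h]
lemma vx_zero : vx 0 = pt 0 0 0 := by rw [vx, if_pos rfl]

lemma pt_zero (k l : ℤ) : pt k 0 0 = pt l 0 0 := by simp [pt]

/-- edge sets by label: `0`, `1` are the walls, `k` with `Ed n k` the sloped edges -/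
def ES (n L : ℤ) : Set Plane := {x | (L = 0 ∧ x ∈ Wall2) ∨ (L = 1 ∧ x ∈ Wall3) ∨ (Ed n L ∧ x ∈ EE n L)}

def EndOf (n L m : ℤ) : Prop :=
  (L = 0 ∧ (m = 0 ∨ m = 2)) ∨ (L = 1 ∧ (m = 0 ∨ m = 3)) ∨ (L = n ∧ (m = n ∨ m = n - 1)) ∨
    (2 ≤ L ∧ L ≤ n - 2 ∧ (m = L ∨ m = L + 2))

def Meet (n L L' : ℤ) (x : Plane) : Prop := ∃ m, EndOf n L m ∧ EndOf n L' m ∧ x = vx m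

lemma Meet.symm {n L L' : ℤ} {x : Plane} (h : Meet n L L' x) : Meet n L' L x := by
  obtain ⟨m, a, b, c⟩ := h
  exact ⟨m, b, a, c⟩

lemma meet23 {n : ℤ} {x : Plane} (h : x ∈ Wall2) (h' : x ∈ Wall3) : Meet n 0 1 x := by
  obtain ⟨c, h0, h1, rfl⟩ := h
  obtain ⟨c', h0', h1', e⟩ := h'
  rw [pt_shift1 (k := 2) (l := 3) (by norm_num)] at e
  obtain ⟨a, b⟩ := pt_inj e
  have : c = 0 := by linarith
  subst this
  exact ⟨0, Or.inl ⟨rfl, Or.inl rfl⟩, Or.inr (Or.inl ⟨rfl, Or.inl rfl⟩), by rw [vx_zero]; exact pt_zero _ _⟩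

lemma gg_zero (n k : ℤ) : gg n k 0 0 = 0 := by simp [gg]

lemma eq_left {n k : ℤ} (hk : 2 ≤ k) {p : ℝ} (h : gg n k p 0 = 1) : p = (k : ℝ) + 1 := by
  have : (0 : ℝ) < k + 1 := by exact_mod_cast (by omega : 0 < k + 1)
  rwa [gg_left, div_eq_one_iff_eq this.ne'] at h

lemma eq_right {n k : ℤ} (hn : 3 ≤ n) (hk : 2 ≤ k) {p : ℝ} (h : gg n k 0 p = 1) : p = sr n k := by
  rwa [gg_right, div_eq_one_iff_eq (sr_pos hn (by omega)).ne'] at h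

lemma meet2 {n k : ℤ} (hn : 3 ≤ n) (hE : Ed n k) {x : Plane} (h : x ∈ Wall2) (h' : x ∈ EE n k) :
    Meet n 0 k x := by
  obtain ⟨c, h0, h1, rfl⟩ := h
  obtain ⟨p, q, hp, hq, hg, e⟩ := h'
  obtain ⟨k1, k2, k3⟩ := hE
  rcases mod3 k with hk | hk | hk
  · rw [pt_shift2 (k := k) (l := 2) (by omega)] at e
    obtain ⟨a, b⟩ := pt_inj e
    have p0 : p = 0 := by linarith
    have q0 : q = c := by linarith
    subst p0 q0
    have := eq_right hn k1 hg
    unfold sr at this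
    split_ifs at this with hkn
    · have : n ≤ 3 := by exact_mod_cast (by linarith : (n : ℝ) ≤ 3)
      have hn3 : n = 3 := by omega
      refine ⟨2, Or.inl ⟨rfl, Or.inr rfl⟩, by unfold EndOf; omega, ?_⟩
      rw [vx_of (by norm_num)]
      subst hn3
      congr 1
      push_cast at *
      linarith
    · exfalso
      have : k + 3 ≤ 3 := by exact_mod_cast (by linarith : (k : ℝ) + 3 ≤ 3)
      omega
  · exfalso
    rw [pt_shift1 (k := k) (l := 2) (by omega)] at e
    obtain ⟨a, b⟩ := pt_inj e
    have p0 : p = 0 := by linarith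
    have q0 : q = 0 := by linarith
    subst p0 q0
    rw [gg_zero] at hg; norm_num at hg
  · rw [pt_per (show 2 % 3 = k % 3 by omega)] at e
    obtain ⟨a, b⟩ := pt_inj e
    subst a b
    have := eq_left k1 hg
    have : k + 1 ≤ 3 := by exact_mod_cast (by linarith : (k : ℝ) + 1 ≤ 3)
    have hk2 : k = 2 := by omega
    subst hk2
    refine ⟨2, Or.inl ⟨rfl, Or.inr rfl⟩, by unfold EndOf; omega, ?_⟩
    rw [vx_of (by norm_num)]
    congr 1

lemma meet3 {n k : ℤ} (hn : 3 ≤ n) (hE : Ed n k) {x : Plane} (h : x ∈ Wall3) (h' : x ∈ EE n k) :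
    Meet n 1 k x := by
  obtain ⟨c, h0, h1, rfl⟩ := h
  obtain ⟨p, q, hp, hq, hg, e⟩ := h'
  obtain ⟨k1, k2, k3⟩ := hE
  rcases mod3 k with hk | hk | hk
  · rw [pt_per (show 3 % 3 = k % 3 by omega)] at e
    obtain ⟨a, b⟩ := pt_inj e
    subst a b
    have := eq_left k1 hg
    have : k + 1 ≤ 4 := by exact_mod_cast (by linarith : (k : ℝ) + 1 ≤ 4)
    have hk2 : k = 3 := by omega
    subst hk2
    refine ⟨3, Or.inr (Or.inl ⟨rfl, Or.inr rfl⟩), by unfold EndOf; omega, ?_⟩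
    rw [vx_of (by norm_num)]
    congr 1
  · rw [pt_shift2 (k := k) (l := 3) (by omega)] at e
    obtain ⟨a, b⟩ := pt_inj e
    have p0 : p = 0 := by linarith
    have q0 : q = c := by linarith
    subst p0 q0
    have := eq_right hn k1 hg
    unfold sr at this
    split_ifs at this with hkn
    · have : n ≤ 4 := by exact_mod_cast (by linarith : (n : ℝ) ≤ 4)
      have hn3 : n = 4 := by omega
      refine ⟨3, Or.inr (Or.inl ⟨rfl, Or.inr rfl⟩), by unfold EndOf; omega, ?_⟩
      rw [vx_of (by norm_num)]
      subst hn3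
      congr 1
      push_cast at *
      linarith
    · exfalso
      have : k + 3 ≤ 4 := by exact_mod_cast (by linarith : (k : ℝ) + 3 ≤ 4)
      omega
  · exfalso
    rw [pt_shift1 (k := k) (l := 3) (by omega)] at e
    obtain ⟨a, b⟩ := pt_inj e
    have p0 : p = 0 := by linarith
    have q0 : q = 0 := by linarith
    subst p0 q0
    rw [gg_zero] at hg; norm_num at hg

lemma meetE1 {n k k' : ℤ} (hn : 3 ≤ n) (hE : Ed n k) (hE' : Ed n k') (hm : k % 3 = k' % 3)
    (hl : k < k') {x : Plane} (h : x ∈ EE n k) (h' : x ∈ EE n k') : Meet n k k' x := by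
  obtain ⟨p, q, hp, hq, hg, rfl⟩ := h
  obtain ⟨p', q', hp', hq', hg', e⟩ := h'
  rw [pt_per hm.symm] at e
  obtain ⟨rfl, rfl⟩ := pt_inj e
  rcases hp.lt_or_eq with h0 | h0
  · have := gg_mono_strict hn hE hE' hm hl h0 hq
    linarith
  · subst h0
    have a := eq_right hn hE.1 hg
    have b := eq_right hn hE'.1 hg'
    have k2 := hE'.2.1
    have k3 := hE.1
    rw [sr, if_neg (by omega)] at a
    rw [sr] at b
    split_ifs at b with hkn
    · have hk : k + 3 = n := by exact_mod_cast (a.symm.trans b)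
      refine ⟨n - 1, by unfold EndOf; omega, by unfold EndOf; omega, ?_⟩
      rw [vx_of (by omega), pt_right, b]
      rw [show k + 2 = n - 1 by omega]; push_cast; congr 1; ring
    · exfalso
      have : k + 3 = k' + 3 := by exact_mod_cast (a.symm.trans b)
      omega

lemma meetE2 {n k k' : ℤ} (hn : 3 ≤ n) (hE : Ed n k) (hE' : Ed n k') (hm : k' % 3 = (k + 2) % 3)
    {x : Plane} (h : x ∈ EE n k) (h' : x ∈ EE n k') : Meet n k k' x := by
  obtain ⟨p, q, hp, hq, hg, rfl⟩ := h
  obtain ⟨p', q', hp', hq', hg', e⟩ := h'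
  have e0 := e
  rw [pt_shift2 hm] at e
  obtain ⟨a, b⟩ := pt_inj e
  have p0 : p = 0 := by linarith
  have q0 : q' = 0 := by linarith
  subst p0 q0
  have q1 : q = p' := by linarith
  subst q1
  have a := eq_right hn hE.1 hg
  have b := eq_left hE'.1 hg'
  obtain ⟨k1, k2, k3⟩ := hE
  obtain ⟨k1', k2', k3'⟩ := hE'
  rw [sr] at a
  split_ifs at a with hkn
  · exfalso
    have : n = k' + 1 := by exact_mod_cast (a.symm.trans b)
    omega
  · have : k + 3 = k' + 1 := by exact_mod_cast (a.symm.trans b)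
    refine ⟨k', by unfold EndOf; omega, by unfold EndOf; omega, ?_⟩
    rw [vx_of (by omega), ← b, e0]

lemma meet_all {n L L' : ℤ} (hn : 3 ≤ n) (hL : L ≠ L') {x : Plane} (h : x ∈ ES n L)
    (h' : x ∈ ES n L') : Meet n L L' x := by
  rcases h with ⟨rfl, h⟩ | ⟨rfl, h⟩ | ⟨hE, h⟩ <;> rcases h' with ⟨rfl, h'⟩ | ⟨rfl, h'⟩ | ⟨hE', h'⟩
  · exact absurd rfl hL
  · exact meet23 h h'
  · exact meet2 hn hE' h h'
  · exact (meet23 h' h).symm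
  · exact absurd rfl hL
  · exact meet3 hn hE' h h'
  · exact (meet2 hn hE h' h).symm
  · exact (meet3 hn hE h' h).symm
  · rcases three_res L L' with hm | hm | hm
    · rcases lt_or_gt_of_ne hL with hl | hl
      · exact meetE1 hn hE hE' hm.symm hl h h'
      · exact (meetE1 hn hE' hE hm hl h' h).symm
    · exact meetE2 hn hE hE' hm h h'
    · exact (meetE2 hn hE' hE hm h' h).symm

/-- edges as segments -/
lemma seg_wall {k : ℤ} {r : ℝ} (hr : 0 < r) (x : Plane) :
    x ∈ segment ℝ (pt k 0 0) (pt k r 0) ↔ ∃ c : ℝ, 0 ≤ c ∧ c ≤ r ∧ x = pt k c 0 := by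
  constructor
  · rintro ⟨a, b, ha, hb, hab, rfl⟩
    refine ⟨b * r, by positivity, by nlinarith, ?_⟩
    rw [show a = 1 - b by linarith, pt_lin]; congr 1 <;> ring
  · rintro ⟨c, h0, h1, rfl⟩
    refine ⟨1 - c / r, c / r, ?_, by positivity, by ring, ?_⟩
    · have : c / r ≤ 1 := by rw [div_le_one hr]; exact h1
      linarith
    · rw [pt_lin]; congr 1
      · field_simp; ring
      · ring

lemma seg_EE {n k : ℤ} (hn : 3 ≤ n) (hk : 2 ≤ k) :
    segment ℝ (pt k ((k : ℝ) + 1) 0) (pt k 0 (sr n k)) = EE n k := by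
  have h1 : (0 : ℝ) < k + 1 := by exact_mod_cast (by omega : 0 < k + 1)
  have h2 := sr_pos (k := k) hn (by omega)
  ext x; constructor
  · rintro ⟨a, b, ha, hb, hab, rfl⟩
    refine ⟨a * (k + 1), b * sr n k, by positivity, by positivity, ?_, ?_⟩
    · unfold gg; field_simp; linarith
    · rw [show a = 1 - b by linarith, pt_lin]; congr 1 <;> ring
  · rintro ⟨p, q, hp, hq, hg, rfl⟩
    unfold gg at hg
    refine ⟨p / (k + 1), q / sr n k, by positivity, by positivity, hg, ?_⟩
    have e1 : 1 - q / sr n k = p / ((k : ℝ) + 1) := by linarith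
    rw [show p / ((k : ℝ) + 1) = 1 - q / sr n k by linarith, pt_lin, e1]
    congr 1
    · field_simp; ring
    · field_simp; ring

lemma ES0 {n : ℤ} : segment ℝ (vx 0) (vx 2) = ES n 0 := by
  ext x
  rw [vx_zero, vx_of (by norm_num), pt_zero 0 2, seg_wall (by norm_num)]
  constructor
  · rintro ⟨c, h0, h1, rfl⟩
    exact Or.inl ⟨rfl, c, h0, by norm_num at h1; exact h1, rfl⟩
  · rintro (⟨_, c, h0, h1, rfl⟩ | ⟨h, _⟩ | ⟨h, _⟩)
    · exact ⟨c, h0, by norm_num; exact h1, rfl⟩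
    · omega
    · have := h.1; omega

lemma ES1 {n : ℤ} : segment ℝ (vx 3) (vx 0) = ES n 1 := by
  ext x
  rw [segment_symm, vx_zero, vx_of (by norm_num), pt_zero 0 3, seg_wall (by norm_num)]
  constructor
  · rintro ⟨c, h0, h1, rfl⟩
    exact Or.inr (Or.inl ⟨rfl, c, h0, by norm_num at h1; exact h1, rfl⟩)
  · rintro (⟨h, _⟩ | ⟨_, c, h0, h1, rfl⟩ | ⟨h, _⟩)
    · omega
    · exact ⟨c, h0, by norm_num; exact h1, rfl⟩
    · have := h.1; omega

lemma ES_eq {n k : ℤ} (h : Ed n k) : ES n k = EE n k := by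
  ext x; constructor
  · rintro (⟨h', _⟩ | ⟨h', _⟩ | ⟨_, h'⟩)
    · have := h.1; omega
    · have := h.1; omega
    · exact h'
  · intro h'; exact Or.inr (Or.inr ⟨h, h'⟩)

lemma ESk {n k : ℤ} (hn : 3 ≤ n) (h1 : 2 ≤ k) (h2 : k ≤ n - 2) : segment ℝ (vx k) (vx (k + 2)) = ES n k := by
  rw [ES_eq ⟨h1, by omega, by omega⟩, ← seg_EE hn h1, vx_of (by omega), vx_of (by omega), sr, if_neg (by omega),
    pt_right k]
  push_cast
  rw [show (k : ℝ) + 2 + 1 = k + 3 by ring]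

lemma ESn {n : ℤ} (hn : 3 ≤ n) : segment ℝ (vx n) (vx (n - 1)) = ES n n := by
  rw [ES_eq ⟨by omega, by omega, by omega⟩, ← seg_EE hn (by omega), vx_of (by omega), vx_of (by omega), sr, if_pos rfl,
    pt_right n, pt_per (show (n - 1) % 3 = (n + 2) % 3 by omega)]
  push_cast
  rw [show (n : ℝ) - 1 + 1 = n by ring]

lemma vx_inj {m m' : ℤ} (h : m = 0 ∨ 2 ≤ m) (h' : m' = 0 ∨ 2 ≤ m') (e : vx m = vx m') : m = m' := by
  have pos : ∀ j : ℤ, 2 ≤ j → (0 : ℝ) < j + 1 := fun j hj => by exact_mod_cast (by omega : 0 < j + 1)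
  have aux : ∀ j : ℤ, 2 ≤ j → vx 0 ≠ vx j := fun j hj he => by
    rw [vx_zero, vx_of (by omega), pt_zero 0 j] at he
    have := (pt_inj he).1
    have := pos j hj
    linarith
  have aux2 : ∀ i j : ℤ, 2 ≤ i → 2 ≤ j → j % 3 = (i + 2) % 3 → vx i ≠ vx j := fun i j hi hj hm he => by
    rw [vx_of (by omega), vx_of (by omega), pt_shift2 hm] at he
    have := (pt_inj he).1
    have := pos i hi
    linarith
  rcases h with rfl | h <;> rcases h' with rfl | h'
  · rfl
  · exact absurd e (aux _ h')
  · exact absurd e.symm (aux _ h)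
  · rcases three_res m m' with hm | hm | hm
    · rw [vx_of (by omega), vx_of (by omega), pt_per hm] at e
      have := (pt_inj e).1
      have : (m : ℝ) = m' := by linarith
      exact_mod_cast this
    · exact absurd e (aux2 _ _ h h' hm)
    · exact absurd e.symm (aux2 _ _ h' h hm)


/-! ### The vertex cycle -/

def sg (n v : ℤ) : ℤ := if 2 * v ≤ n then 2 * v else 2 * (n - v) + 1

def el (n v : ℤ) : ℤ :=
  if v = 0 then 0 else if v = n - 1 then 1 else if 2 * v + 2 ≤ n then 2 * v else
    if 2 * v ≤ n then n else 2 * (n - v) - 1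

/-- cyclic successor -/
def nx (n v : ℤ) : ℤ := if v = n - 1 then 0 else v + 1

lemma sg_inj {n v w : ℤ} (hn : 3 ≤ n) (hv : 0 ≤ v) (hv' : v < n) (hw : 0 ≤ w) (hw' : w < n)
    (h : sg n v = sg n w) : v = w := by
  unfold sg at h; split_ifs at h <;> omega

lemma sg_val {n v : ℤ} (hn : 3 ≤ n) (hv : 0 ≤ v) (hv' : v < n) : sg n v = 0 ∨ 2 ≤ sg n v := by
  unfold sg; split_ifs <;> omega

lemma el_inj {n v w : ℤ} (hn : 3 ≤ n) (hv : 0 ≤ v) (hv' : v < n) (hw : 0 ≤ w) (hw' : w < n)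
    (h : el n v = el n w) : v = w := by
  unfold el at h; split_ifs at h <;> omega

lemma end_el {n v m : ℤ} (hn : 3 ≤ n) (hv : 0 ≤ v) (hv' : v < n)
    (h : EndOf n (el n v) m) : m = sg n v ∨ m = sg n (nx n v) := by
  unfold EndOf el at h; unfold sg nx
  split_ifs at h ⊢ <;> omega

lemma edge_el {n v : ℤ} (hn : 3 ≤ n) (hv : 0 ≤ v) (hv' : v < n) :
    segment ℝ (vx (sg n v)) (vx (sg n (nx n v))) = ES n (el n v) := by
  have key : ∀ a b c : ℤ, sg n v = a → sg n (nx n v) = b → el n v = c →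
      segment ℝ (vx a) (vx b) = ES n c →
      segment ℝ (vx (sg n v)) (vx (sg n (nx n v))) = ES n (el n v) := by
    rintro _ _ _ rfl rfl rfl h; exact h
  by_cases h0 : v = 0
  · refine key 0 2 0 ?_ ?_ ?_ ES0
    · unfold sg; split_ifs <;> omega
    · unfold sg nx; split_ifs <;> omega
    · unfold el; split_ifs; omega
  by_cases h1 : v = n - 1
  · refine key 3 0 1 ?_ ?_ ?_ ES1
    · unfold sg; split_ifs <;> omega
    · unfold sg nx; split_ifs <;> omega
    · unfold el; split_ifs; omega
  by_cases h2 : 2 * v + 2 ≤ n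
  · refine key (2 * v) (2 * v + 2) (2 * v) ?_ ?_ ?_ (ESk hn (by omega) (by omega))
    · unfold sg; split_ifs <;> omega
    · unfold sg nx; split_ifs <;> omega
    · unfold el; split_ifs; omega
  by_cases h3 : 2 * v ≤ n
  · by_cases h4 : 2 * v = n
    · refine key n (n - 1) n ?_ ?_ ?_ (ESn hn)
      · unfold sg; split_ifs <;> omega
      · unfold sg nx; split_ifs <;> omega
      · unfold el; split_ifs; omega
    · refine key (n - 1) n n ?_ ?_ ?_ (by rw [segment_symm]; exact ESn hn)
      · unfold sg; split_ifs <;> omega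
      · unfold sg nx; split_ifs <;> omega
      · unfold el; split_ifs; omega
  · refine key (2 * (n - v) - 1 + 2) (2 * (n - v) - 1) (2 * (n - v) - 1) ?_ ?_ ?_
      (by rw [segment_symm]; exact ESk hn (by omega) (by omega))
    · unfold sg; split_ifs; omega
    · unfold sg nx; split_ifs <;> omega
    · unfold el; split_ifs; omega

noncomputable def vp (n : ℕ) (i : ZMod n) : Plane := vx (sg n (i.val : ℤ))

lemma val_nx {n : ℕ} (hn : 3 ≤ n) (i : ZMod n) : (((i + 1).val : ℕ) : ℤ) = nx n (i.val : ℤ) := by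
  haveI : NeZero n := ⟨by omega⟩
  have hi := i.val_lt
  rw [ZMod.val_add, ZMod.val_one_eq_one_mod, Nat.mod_eq_of_lt (show 1 < n by omega)]
  unfold nx
  split_ifs with h
  · have : i.val + 1 = n := by omega
    rw [this]; simp
  · rw [Nat.mod_eq_of_lt (by omega)]; simp

lemma val_bd {n : ℕ} (hn : 3 ≤ n) (i : ZMod n) : 0 ≤ (i.val : ℤ) ∧ (i.val : ℤ) < n := by
  haveI : NeZero n := ⟨by omega⟩
  have hi := i.val_lt
  omega

lemma edge_vp {n : ℕ} (hn : 3 ≤ n) (i : ZMod n) : polyEdge (vp n) i = ES n (el n (i.val : ℤ)) := by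
  rw [polyEdge, vp, vp, val_nx hn, edge_el (by omega) (val_bd hn i).1 (val_bd hn i).2]

lemma sgv_inj {n : ℕ} (hn : 3 ≤ n) {i j : ZMod n} (h : sg n (i.val : ℤ) = sg n (j.val : ℤ)) : i = j := by
  haveI : NeZero n := ⟨by omega⟩
  have := sg_inj (by omega) (val_bd hn i).1 (val_bd hn i).2 (val_bd hn j).1 (val_bd hn j).2 h
  exact ZMod.val_injective n (by exact_mod_cast this)

lemma vp_inj {n : ℕ} (hn : 3 ≤ n) : Function.Injective (vp n) := fun i j h =>
  sgv_inj hn (vx_inj (sg_val (by omega) (val_bd hn i).1 (val_bd hn i).2)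
    (sg_val (by omega) (val_bd hn j).1 (val_bd hn j).2) h)

lemma vp_meet {n : ℕ} (hn : 3 ≤ n) {i j : ZMod n} (hij : i ≠ j) {x : Plane}
    (h : x ∈ polyEdge (vp n) i) (h' : x ∈ polyEdge (vp n) j) :
    ∃ l, x = vp n l ∧ (l = i ∨ l = i + 1) ∧ (l = j ∨ l = j + 1) := by
  haveI : NeZero n := ⟨by omega⟩
  rw [edge_vp hn] at h h'
  have hL : el n (i.val : ℤ) ≠ el n (j.val : ℤ) := fun e => hij (ZMod.val_injective n (by
    exact_mod_cast el_inj (by omega) (val_bd hn i).1 (val_bd hn i).2 (val_bd hn j).1 (val_bd hn j).2 e))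
  obtain ⟨m, a, b, rfl⟩ := meet_all (by omega) hL h h'
  have ha := end_el (by omega) (val_bd hn i).1 (val_bd hn i).2 a
  have hb := end_el (by omega) (val_bd hn j).1 (val_bd hn j).2 b
  rw [← val_nx hn] at ha hb
  rcases ha with rfl | rfl
  · refine ⟨i, rfl, Or.inl rfl, ?_⟩
    rcases hb with hb | hb
    · exact Or.inl (sgv_inj hn hb)
    · exact Or.inr (sgv_inj hn hb)
  · refine ⟨i + 1, rfl, Or.inr rfl, ?_⟩
    rcases hb with hb | hb
    · exact Or.inl (sgv_inj hn hb)
    · exact Or.inr (sgv_inj hn hb)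

lemma vp_simple {n : ℕ} (hn : 3 ≤ n) : IsSimplePolygon (vp n) := by
  haveI : Fact (1 < n) := ⟨by omega⟩
  have one : (1 : ZMod n) ≠ 0 := one_ne_zero
  have two : (1 + 1 : ZMod n) ≠ 0 := by
    intro h
    have : ((2 : ℕ) : ZMod n) = 0 := by rw [← h]; norm_num
    rw [ZMod.natCast_eq_zero_iff] at this
    have := Nat.le_of_dvd (by norm_num) this
    omega
  refine ⟨hn, vp_inj hn, fun i => ?_, fun i j h1 h2 h3 => ?_⟩
  · ext x
    rw [mem_inter_iff, mem_singleton_iff]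
    constructor
    · rintro ⟨h, h'⟩
      obtain ⟨l, rfl, ha, hb⟩ := vp_meet hn (by simp) h h'
      rcases ha with rfl | rfl
      · exfalso
        rcases hb with hb | hb
        · simp at hb
        · rw [add_assoc] at hb
          exact two (by simpa using hb)
      · rfl
    · rintro rfl
      exact ⟨right_mem_segment _ _ _, left_mem_segment _ _ _⟩
  · rw [Set.eq_empty_iff_forall_notMem]
    rintro x ⟨h, h'⟩
    obtain ⟨l, -, ha, hb⟩ := vp_meet hn h1.symm h h'
    rcases ha with rfl | rfl <;> rcases hb with hb | hb
    · exact h1 hb.symm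
    · exact h3 hb
    · exact h2 hb.symm
    · exact h1 (add_right_cancel hb).symm

lemma vp_body {n : ℕ} (hn : 3 ≤ n) : polyBody (vp n) = PB n := by
  haveI : NeZero n := ⟨by omega⟩
  have surj : ∀ (v : ℕ) (c : ℤ), v < n → el n (v : ℤ) = c → ES n c ⊆ polyBody (vp n) := by
    rintro v _ hv rfl x hx
    refine mem_iUnion.2 ⟨(v : ZMod n), ?_⟩
    rw [edge_vp hn, ZMod.val_natCast_of_lt hv]; exact hx
  ext x
  constructor
  · intro hx
    obtain ⟨i, hi⟩ := mem_iUnion.1 hx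
    rw [edge_vp hn] at hi
    rcases hi with ⟨_, h⟩ | ⟨_, h⟩ | ⟨hE, h⟩
    · exact Or.inl h
    · exact Or.inr (Or.inl h)
    · exact Or.inr (Or.inr ⟨_, hE, h⟩)
  · rintro (h | h | ⟨k, hE, h⟩)
    · exact surj 0 0 (by omega) (by unfold el; split_ifs <;> omega) (Or.inl ⟨rfl, h⟩)
    · exact surj (n - 1) 1 (by omega) (by unfold el; split_ifs <;> omega) (Or.inr (Or.inl ⟨rfl, h⟩))
    · have hx : x ∈ ES n k := Or.inr (Or.inr ⟨hE, h⟩)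
      obtain ⟨e1, e2, e3⟩ := hE
      by_cases hk : k = n
      · exact surj (n / 2) k (by omega) (by unfold el; split_ifs <;> omega) hx
      by_cases h2 : k % 2 = 0
      · exact surj (k / 2).toNat k (by omega) (by unfold el; split_ifs <;> omega) hx
      · exact surj (n - ((k + 1) / 2).toNat) k (by omega) (by unfold el; split_ifs <;> omega) hx

lemma isClosed_body {n : ℕ} (hn : 3 ≤ n) : IsClosed (polyBody (vp n)) := by
  haveI : NeZero n := ⟨by omega⟩
  refine isClosed_iUnion_of_finite fun i => ?_
  rw [polyEdge, ← convexHull_pair]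
  exact ((Set.toFinite _).isCompact_convexHull ℝ).isClosed

theorem stmt19 (n : ℕ) (hn : 3 ≤ n) :
    ∃ p : ZMod n → Plane, IsSimplePolygon p ∧
      (∀ a ∈ intP (polyBody p), ∀ b ∈ intP (polyBody p),
        ∃ k ≤ n / 2, PolyPath (intP (polyBody p)) a b k) ∧
      (∃ a ∈ intP (polyBody p), ∃ b ∈ intP (polyBody p),
        ∀ k : ℕ, PolyPath (intP (polyBody p)) a b k → n / 2 ≤ k) ∧
      (∀ a ∈ extP (polyBody p), ∀ b ∈ extP (polyBody p),
        ∃ k ≤ (n + 1) / 2, PolyPath (extP (polyBody p)) a b k) ∧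
      (∃ a ∈ extP (polyBody p), ∃ b ∈ extP (polyBody p),
        ∀ k : ℕ, PolyPath (extP (polyBody p)) a b k → (n + 1) / 2 ≤ k) := by
  have hn' : (3 : ℤ) ≤ n := by omega
  have hcl := isClosed_body hn
  refine ⟨vp n, vp_simple hn, ?_⟩
  rw [vp_body hn] at hcl ⊢
  rw [intP_eq hn' hcl, extP_eq hn' hcl]
  refine ⟨fun a ha b hb => ?_, ?_, fun a ha b hb => ?_, ?_⟩
  · obtain ⟨k, hk, h⟩ := int_upper hn' ha hb
    exact ⟨k, by omega, h⟩
  · obtain ⟨a, ha, b, hb, h⟩ := int_lower hn'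
    exact ⟨a, ha, b, hb, fun k hk => by have := h k hk; omega⟩
  · obtain ⟨k, hk, h⟩ := ext_upper hn' ha hb
    exact ⟨k, by omega, h⟩
  · obtain ⟨a, ha, b, hb, h⟩ := ext_lower hn'
    exact ⟨a, ha, b, hb, fun k hk => by have := h k hk; omega⟩
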